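/- arXiv:2010.00277 — 4 statements merged into one kernel-verified Lean document; each statement's English description precedes it below -/
import Mathlib

section
/- Every Jordan copencil in S³, i.e., every regular 4-dimensional linear subspace L ⊆ S³ whose reciprocal variety L⁻¹ is a linear space, is congruent to exactly one of the following two subspaces: L₁ = {all matrices [[x,0,0],[0,y,w],[0,w,z]] : x,y,z,w ∈ ℂ} or L₂ = {all matrices [[x,y,w],[y,z,0],[w,0,0]] : x,y,z,w ∈ ℂ}. -/
open Matrix

noncomputable section

abbrev Mat (n : ℕ) := Matrix (Fin n) (Fin n) ℂ

/-- Congruence by `P`, i.e. `X ↦ P X Pᵀ`, as a linear map. -/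
def congMap {n : ℕ} (P : Mat n) : Mat n →ₗ[ℂ] Mat n where
  toFun X := P * X * Pᵀ
  map_add' := by intros; simp [Matrix.mul_add, Matrix.add_mul]
  map_smul' := by intros; simp [Matrix.mul_smul, Matrix.smul_mul]

/-- The reciprocal variety of a linear subspace `L` of matrices. -/
def recipVar {n : ℕ} (L : Submodule ℂ (Mat n)) : Set (Mat n) :=
  closure {Y : Mat n | ∃ X ∈ L, IsUnit (Matrix.det X) ∧ Y = X⁻¹}

/-- The copencil `L₁` of matrices `[[x,0,0],[0,y,w],[0,w,z]]`. -/
def copencil1 : Submodule ℂ (Mat 3) :=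
  Submodule.span ℂ {!![(1:ℂ),0,0;0,0,0;0,0,0], !![(0:ℂ),0,0;0,1,0;0,0,0],
    !![(0:ℂ),0,0;0,0,0;0,0,1], !![(0:ℂ),0,0;0,0,1;0,1,0]}

/-- The copencil `L₂` of matrices `[[x,y,w],[y,z,0],[w,0,0]]`. -/
def copencil2 : Submodule ℂ (Mat 3) :=
  Submodule.span ℂ {!![(1:ℂ),0,0;0,0,0;0,0,0], !![(0:ℂ),1,0;1,0,0;0,0,0],
    !![(0:ℂ),0,0;0,1,0;0,0,0], !![(0:ℂ),0,1;0,0,0;1,0,0]}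

/-!
Hua's identity expresses `A U⁻¹ A` through inverses and linear combinations. Hence, if inversion
exchanges the invertible elements of `L` and of a linear space `M`, then `A Y A ∈ L` for all
`A ∈ L` and `Y ∈ M`. For an invertible `U ∈ L` the space `U⁻¹ L` therefore contains `1` and is
closed under `(a, b) ↦ a b a`, so it contains the algebra generated by each of its elements `a`.
If `a` is not scalar this algebra has zero divisors, and in size `3` one of them has rank one:
thus `L` contains some `v vᵀ` with `v ≠ 0`.

If `A U⁻¹ v` is proportional to `v` for all `A ∈ L`, put `n = U⁻¹ v`. Otherwise some
`w = A U⁻¹ v` is independent of `v`, the space `L` contains `v vᵀ`, `w wᵀ` and `v wᵀ + w vᵀ`, and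
these annihilate `n = v × w`. Since `dim L = 4`, in both cases `A n` is proportional to `m = U n`
for all `A ∈ L`. Symmetric matrices with this property form a space of dimension four, which in a
basis adapted to `n` and to the plane orthogonal to `m` is `L₁` if `n ⬝ m ≠ 0` and `L₂` if
`n ⬝ m = 0`. These are not congruent: some `p ≠ 0` satisfies `pᵀ X p = 0` for all `X ∈ L₂`, but
`L₁` contains all diagonal matrices.
-/

section ReciprocalPair

variable {K n : Type*} [Field K] [Fintype n] [DecidableEq n]

theorem eventually_cofinite_isUnit_det_add_smul (A : Matrix n n K) {U : Matrix n n K}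
    (hU : IsUnit U.det) : ∀ᶠ t : K in Filter.cofinite, IsUnit (A + t • U).det := by
  filter_upwards [(Matrix.finite_spectrum (-(A * U⁻¹))).compl_mem_cofinite] with t ht
  have hfactor : A + t • U = (algebraMap K (Matrix n n K) t - -(A * U⁻¹)) * U := by
    rw [sub_neg_eq_add, add_mul, nonsing_inv_mul_cancel_right _ _ hU,
      Algebra.algebraMap_eq_smul_one, smul_one_mul, add_comm]
  rw [hfactor, det_mul]
  exact ((isUnit_iff_isUnit_det _).mp (spectrum.notMem_iff.mp ht)).mul hU

theorem span_isUnit_det_eq [Infinite K] {L : Submodule K (Matrix n n K)}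
    (hL : ∃ U ∈ L, IsUnit U.det) : Submodule.span K {X | X ∈ L ∧ IsUnit X.det} = L := by
  refine le_antisymm (Submodule.span_le.mpr fun X hX => hX.1) fun A hA => ?_
  obtain ⟨U, hUL, hU⟩ := hL
  obtain ⟨t, ht⟩ := (eventually_cofinite_isUnit_det_add_smul A hU).exists
  have hAU_mem : A + t • U ∈ Submodule.span K {X | X ∈ L ∧ IsUnit X.det} :=
    Submodule.subset_span ⟨add_mem hA (L.smul_mem t hUL), ht⟩
  have hU_mem : U ∈ Submodule.span K {X | X ∈ L ∧ IsUnit X.det} :=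
    Submodule.subset_span ⟨hUL, hU⟩
  simpa using sub_mem hAU_mem (Submodule.smul_mem _ t hU_mem)

/-- Two regular matrix spaces `L` and `M` form a reciprocal pair when matrix inversion exchanges
their invertible elements. This is the algebraic form of `L⁻¹ = M`, symmetric in `L` and `M`. -/
structure IsReciprocalPair (L M : Submodule K (Matrix n n K)) : Prop where
  exists_isUnit_det : ∃ X ∈ L, IsUnit X.det
  inv_mem_right : ∀ X ∈ L, IsUnit X.det → X⁻¹ ∈ M
  inv_mem_left : ∀ Y ∈ M, IsUnit Y.det → Y⁻¹ ∈ L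

namespace IsReciprocalPair

variable {L M : Submodule K (Matrix n n K)} {A U Y : Matrix n n K}

theorem symm (h : IsReciprocalPair L M) : IsReciprocalPair M L :=
  let ⟨X, hX, hdet⟩ := h.exists_isUnit_det
  ⟨⟨X⁻¹, h.inv_mem_right X hX hdet, isUnit_nonsing_inv_det X hdet⟩, h.inv_mem_left, h.inv_mem_right⟩

-- Hua's identity: `B * U⁻¹ * B = B + ((B - U)⁻¹ - B⁻¹)⁻¹`.
theorem mul_inv_mul_mem_of_isUnit (h : IsReciprocalPair L M) {B : Matrix n n K} (hB : B ∈ L)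
    (hU : U ∈ L) (hBdet : IsUnit B.det) (hUdet : IsUnit U.det) (hBU : IsUnit (B - U).det) :
    B * U⁻¹ * B ∈ L := by
  set Y := (B - U)⁻¹ - B⁻¹ with hYdef
  have hYmem : Y ∈ M := sub_mem (h.inv_mem_right _ (sub_mem hB hU) hBU) (h.inv_mem_right _ hB hBdet)
  have hY : Y = (B - U)⁻¹ * U * B⁻¹ := by
    have hiff : IsUnit (B - U) ↔ IsUnit B :=
      iff_of_true ((isUnit_iff_isUnit_det _).mpr hBU) ((isUnit_iff_isUnit_det _).mpr hBdet)
    rw [hYdef, inv_sub_inv hiff, sub_sub_cancel]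
  have hYdet : IsUnit Y.det := by
    rw [hY, det_mul, det_mul]
    exact ((isUnit_nonsing_inv_det _ hBU).mul hUdet).mul (isUnit_nonsing_inv_det _ hBdet)
  have hYinv : Y⁻¹ + B = B * U⁻¹ * B := by
    rw [hY, Matrix.mul_inv_rev, Matrix.mul_inv_rev, nonsing_inv_nonsing_inv _ hBdet,
      nonsing_inv_nonsing_inv _ hBU, ← mul_assoc, mul_sub, nonsing_inv_mul_cancel_right _ _ hUdet,
      sub_add_cancel]
  exact hYinv ▸ add_mem (h.inv_mem_left Y hYmem hYdet) hB

variable [Infinite K]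

theorem mul_inv_mul_mem (h : IsReciprocalPair L M) (hA : A ∈ L) (hU : U ∈ L)
    (hUdet : IsUnit U.det) : A * U⁻¹ * A ∈ L := by
  obtain ⟨t, ht, ht'⟩ := ((eventually_cofinite_isUnit_det_add_smul A hUdet).and
    (eventually_cofinite_isUnit_det_add_smul (A - U) hUdet)).exists
  have hB : A + t • U ∈ L := add_mem hA (L.smul_mem t hU)
  have hmem := h.mul_inv_mul_mem_of_isUnit hB hU ht hUdet (by rwa [add_sub_right_comm])
  have hexpand : (A + t • U) * U⁻¹ * (A + t • U) =
      A * U⁻¹ * A + ((2 * t) • A + (t * t) • U) := by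
    simp only [add_mul, mul_add, smul_mul_assoc, mul_smul_comm, mul_nonsing_inv _ hUdet,
      nonsing_inv_mul_cancel_right _ _ hUdet, one_mul]
    module
  rw [hexpand] at hmem
  exact (L.add_mem_iff_left (add_mem (L.smul_mem _ hA) (L.smul_mem _ hU))).mp hmem

theorem mul_mul_mem (h : IsReciprocalPair L M) (hA : A ∈ L) (hY : Y ∈ M) : A * Y * A ∈ L := by
  let φ : Matrix n n K →ₗ[K] Matrix n n K := LinearMap.mulRight K A ∘ₗ LinearMap.mulLeft K A
  have hle : M ≤ L.comap φ := by
    rw [← span_isUnit_det_eq h.symm.exists_isUnit_det, Submodule.span_le]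
    rintro Z ⟨hZ, hZdet⟩
    have hmem := h.mul_inv_mul_mem hA (h.inv_mem_left Z hZ hZdet) (isUnit_nonsing_inv_det Z hZdet)
    rwa [nonsing_inv_nonsing_inv Z hZdet] at hmem
  exact hle hY

theorem inv_mul_mul_inv_mem (h : IsReciprocalPair L M) (hA : A ∈ L) (hU : U ∈ L)
    (hUdet : IsUnit U.det) : U⁻¹ * A * U⁻¹ ∈ M :=
  h.symm.mul_mul_mem (h.inv_mem_right U hU hUdet) hA

theorem vecMulVec_mulVec_mem (h : IsReciprocalPair L M) (hA : A ∈ L) (hAsymm : A.IsSymm)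
    (hU : U ∈ L) (hUsymm : U.IsSymm) (hUdet : IsUnit U.det) {v : n → K}
    (hv : vecMulVec v v ∈ L) :
    vecMulVec (A *ᵥ U⁻¹ *ᵥ v) (A *ᵥ U⁻¹ *ᵥ v) ∈ L := by
  have hinv : (U⁻¹)ᵀ = U⁻¹ := by rw [transpose_nonsing_inv, hUsymm.eq]
  have hmem := h.mul_mul_mem hA (h.inv_mul_mul_inv_mem hv hU hUdet)
  rwa [mul_vecMulVec, vecMulVec_mul, mul_vecMulVec, vecMulVec_mul, ← mulVec_transpose U⁻¹,
    ← mulVec_transpose A, hinv, hAsymm.eq] at hmem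

end IsReciprocalPair

end ReciprocalPair

section JordanAlgebra

theorem toSubmodule_adjoin_singleton_le {R S : Type*} [CommRing R] [Ring S] [Algebra R S]
    {J : Submodule R S} (h_one : 1 ∈ J) (h_quad : ∀ a ∈ J, ∀ b ∈ J, a * b * a ∈ J)
    {a : S} (ha : a ∈ J) : Subalgebra.toSubmodule (Algebra.adjoin R {a}) ≤ J := by
  have h_pow : ∀ k : ℕ, a ^ k ∈ J := by
    intro k
    induction k using Nat.twoStepInduction with
    | zero => simpa using h_one
    | one => simpa using ha
    | more k ih _ =>
      have hk : a ^ (k + 2) = a * a ^ k * a := by rw [pow_succ, pow_succ']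
      exact hk ▸ h_quad a ha _ ih
  rw [Algebra.adjoin_eq_span, Submodule.span_le, Submonoid.closure_singleton_eq]
  rintro _ ⟨k, rfl⟩
  exact h_pow k.toAdd

theorem exists_mul_eq_zero_of_ne_bot {K S : Type*} [Field K] [IsAlgClosed K] [Ring S]
    [Algebra K S] [Algebra.IsIntegral K S] {B : Subalgebra K S} (hB : B ≠ ⊥) :
    ∃ x ∈ B, ∃ y ∈ B, x ≠ 0 ∧ y ≠ 0 ∧ x * y = 0 := by
  obtain ⟨a, haB, ha⟩ := SetLike.exists_of_lt (bot_lt_iff_ne_bot.mpr hB)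
  by_contra! hdom
  have : NoZeroDivisors B := ⟨fun {x y} hxy => by
    by_contra! hne
    exact hdom x x.2 y y.2 (by simpa using hne.1) (by simpa using hne.2) congr(($hxy : S))⟩
  have ha0 : a ≠ 0 := fun h => ha (h ▸ zero_mem _)
  have : Nontrivial B := ⟨⟨a, haB⟩, 0, fun h => ha0 congr(($h : S))⟩
  have : IsDomain B := NoZeroDivisors.to_isDomain B
  have : Algebra.IsIntegral K B := .of_injective B.val Subtype.val_injective
  obtain ⟨c, hc⟩ := (IsAlgClosed.algebraMap_bijective_of_isIntegral (k := K)).2 (⟨a, haB⟩ : B)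
  exact ha ⟨c, congr(($hc : S))⟩

theorem rank_ne_zero_of_ne_zero {K m n : Type*} [Field K] [Finite m] [Fintype n]
    {A : Matrix m n K} (hA : A ≠ 0) : A.rank ≠ 0 := by
  classical
  refine mt (fun h => ext_of_mulVec_single fun j => ?_) hA
  have hzero : A.mulVecLin = 0 := LinearMap.range_eq_bot.mp (Submodule.finrank_eq_zero.mp h)
  rw [zero_mulVec]
  exact congr($hzero (Pi.single j 1))

theorem exists_rank_eq_one_mem_adjoin {K : Type*} [Field K] [IsAlgClosed K]
    {a : Matrix (Fin 3) (Fin 3) K} (ha : a ∉ (⊥ : Subalgebra K (Matrix (Fin 3) (Fin 3) K))) :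
    ∃ b ∈ Algebra.adjoin K {a}, b.rank = 1 := by
  have hbot : Algebra.adjoin K {a} ≠ ⊥ := fun h => ha (h ▸ Algebra.self_mem_adjoin_singleton K a)
  obtain ⟨x, hx, y, hy, hx0, hy0, hxy⟩ := exists_mul_eq_zero_of_ne_bot hbot
  have hrank : x.rank + y.rank ≤ 3 := by
    simpa using Matrix.rank_add_rank_le_card_of_mul_eq_zero hxy
  have hx_pos : x.rank ≠ 0 := rank_ne_zero_of_ne_zero hx0
  have hy_pos : y.rank ≠ 0 := rank_ne_zero_of_ne_zero hy0
  rcases (by lia : x.rank = 1 ∨ y.rank = 1) with h | h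
  exacts [⟨x, hx, h⟩, ⟨y, hy, h⟩]

end JordanAlgebra

section RankOne

variable {K n : Type*} [Field K] [Fintype n]

theorem exists_eq_vecMulVec_of_rank_le_one {m : Type*} [Finite m] {A : Matrix m n K}
    (hA : A.rank ≤ 1) : ∃ v w, A = vecMulVec v w := by
  classical
  obtain ⟨v, hv⟩ := finrank_le_one_iff.mp hA
  choose w hw using fun j => hv ⟨A *ᵥ Pi.single j 1, LinearMap.mem_range_self A.mulVecLin _⟩
  refine ⟨v, w, ext_of_mulVec_single fun j => ?_⟩
  ext i
  simpa [vecMulVec_apply, mul_comm] using congr(($(hw j) : m → K) i).symm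

theorem exists_eq_smul_vecMulVec_of_isSymm {A : Matrix n n K} (hsymm : A.IsSymm)
    (hA : A.rank ≤ 1) : ∃ (c : K) (v : n → K), A = c • vecMulVec v v := by
  obtain ⟨v, w, rfl⟩ := exists_eq_vecMulVec_of_rank_le_one hA
  by_cases hv : v = 0
  · exact ⟨0, 0, by simp [hv]⟩
  obtain ⟨i, hi⟩ := Function.ne_iff.mp hv
  have hw : w = (w i / v i) • v := by
    ext j
    have hij : v j * w i = v i * w j := hsymm.apply i j
    rw [Pi.smul_apply, smul_eq_mul, div_mul_eq_mul_div, eq_div_iff hi]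
    linear_combination -hij
  exact ⟨w i / v i, v, by rw [← vecMulVec_smul, ← hw]⟩

end RankOne

section CommonEigenvector

variable {K : Type*} [Field K]

namespace IsReciprocalPair

variable [IsAlgClosed K] {L M : Submodule K (Matrix (Fin 3) (Fin 3) K)}

theorem exists_rank_eq_one_mem (h : IsReciprocalPair L M) (hdim : 1 < Module.finrank K L) :
    ∃ A ∈ L, A.rank = 1 := by
  have : Infinite K := IsAlgClosed.instInfinite
  obtain ⟨U, hU, hUdet⟩ := h.exists_isUnit_det
  -- The normalized space `J = U⁻¹ L` contains `1` and is closed under `(a, b) ↦ a * b * a`.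
  let J := L.comap (LinearMap.mulLeft K U)
  have h_quad : ∀ a ∈ J, ∀ b ∈ J, a * b * a ∈ J := by
    intro a ha b hb
    have hmem := h.mul_mul_mem ha (h.inv_mul_mul_inv_mem hb hU hUdet)
    simpa [J, mul_assoc, nonsing_inv_mul_cancel_left _ _ hUdet] using hmem
  have hU0 : U ≠ 0 := by
    rintro rfl
    simp at hUdet
  obtain ⟨X, hX, hXU⟩ : ∃ X ∈ L, X ∉ Submodule.span K {U} := by
    by_contra! hle
    exact hdim.not_ge ((Submodule.finrank_mono hle).trans (finrank_span_singleton hU0).le)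
  have hXJ : U⁻¹ * X ∈ J := by simpa [J, mul_nonsing_inv_cancel_left _ _ hUdet] using hX
  obtain ⟨b, hb, hrank⟩ := exists_rank_eq_one_mem_adjoin (a := U⁻¹ * X) <| by
    rintro ⟨c, hc⟩
    refine hXU (Submodule.mem_span_singleton.mpr ⟨c, ?_⟩)
    rw [← mul_nonsing_inv_cancel_left _ X hUdet, ← hc]
    simp [Algebra.algebraMap_eq_smul_one]
  refine ⟨U * b, ?_, by rwa [rank_mul_eq_right_of_isUnit_det _ _ hUdet]⟩
  exact toSubmodule_adjoin_singleton_le (by simpa [J] using hU) h_quad hXJ hb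

theorem exists_vecMulVec_mem (h : IsReciprocalPair L M) (hsymm : ∀ X ∈ L, X.IsSymm)
    (hdim : 1 < Module.finrank K L) : ∃ v : Fin 3 → K, v ≠ 0 ∧ vecMulVec v v ∈ L := by
  obtain ⟨A, hA, hrank⟩ := h.exists_rank_eq_one_mem hdim
  obtain ⟨c, v, rfl⟩ := exists_eq_smul_vecMulVec_of_isSymm (hsymm A hA) hrank.le
  have hne : c • vecMulVec v v ≠ 0 := fun h0 => by simp [h0] at hrank
  refine ⟨v, ?_, (L.smul_mem_iff (left_ne_zero_of_smul hne)).mp hA⟩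
  rintro rfl
  simp at hne

end IsReciprocalPair

theorem apply_mem_span_singleton_of_finrank_le {V W : Type*} [AddCommGroup V] [Module K V]
    [FiniteDimensional K V] [AddCommGroup W] [Module K W] {f : V →ₗ[K] W}
    (hf : Module.finrank K V ≤ Module.finrank K f.ker + 1) {u : V} (hu : f u ≠ 0) (x : V) :
    f x ∈ Submodule.span K {f u} := by
  have hle : Module.finrank K f.range ≤ Module.finrank K (Submodule.span K {f u}) := by
    rw [finrank_span_singleton hu]
    have hrank := f.finrank_range_add_finrank_ker
    lia
  have hspan : Submodule.span K {f u} ≤ f.range := by simp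
  exact Submodule.eq_of_le_of_finrank_le hspan hle ▸ f.mem_range_self x

theorem linearIndependent_vecMulVec {R n : Type*} [CommRing R] {v w : n → R}
    (h : LinearIndependent R ![v, w]) :
    LinearIndependent R ![vecMulVec v v, vecMulVec w w, vecMulVec v w + vecMulVec w v] := by
  have hpair := LinearIndependent.pair_iff.mp h
  rw [Fintype.linearIndependent_iff]
  intro a ha
  have hcol (j : n) : a 0 * v j + a 2 * w j = 0 ∧ a 2 * v j + a 1 * w j = 0 := by
    refine hpair _ _ (funext fun i => ?_)
    have hij := congr($ha i j)
    simp [Fin.sum_univ_three, vecMulVec_apply] at hij ⊢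
    linear_combination hij
  have h02 := hpair (a 0) (a 2) (funext fun j => by simpa using (hcol j).1)
  have h21 := hpair (a 2) (a 1) (funext fun j => by simpa using (hcol j).2)
  simp [Fin.forall_fin_succ, h02, h21]

variable {L M : Submodule K (Matrix (Fin 3) (Fin 3) K)} {U : Matrix (Fin 3) (Fin 3) K}

theorem mulVec_crossProduct_mem_span {v w : Fin 3 → K} (hdim : Module.finrank K L ≤ 4) (hU : U ∈ L)
    (hUdet : IsUnit U.det) (hvw : LinearIndependent K ![v, w]) (hv : vecMulVec v v ∈ L)
    (hw : vecMulVec w w ∈ L) (hvwL : vecMulVec v w + vecMulVec w v ∈ L) :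
    ∀ A ∈ L, A *ᵥ (v ⨯₃ w) ∈ Submodule.span K {U *ᵥ (v ⨯₃ w)} := by
  set n := v ⨯₃ w with hn
  let f : L →ₗ[K] (Fin 3 → K) := (Matrix.mulVecBilin K K).flip n ∘ₗ L.subtype
  let b : Fin 3 → f.ker :=
    ![⟨⟨_, hv⟩, by simp [f, hn, vecMulVec_mulVec]⟩,
      ⟨⟨_, hw⟩, by simp [f, hn, vecMulVec_mulVec]⟩,
      ⟨⟨_, hvwL⟩, by simp [f, hn, vecMulVec_mulVec]⟩]
  have hb : LinearIndependent K b := by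
    have hcomp : (L.subtype ∘ₗ f.ker.subtype) ∘ b =
        ![vecMulVec v v, vecMulVec w w, vecMulVec v w + vecMulVec w v] := by
      ext i : 1
      fin_cases i <;> rfl
    exact .of_comp (L.subtype ∘ₗ f.ker.subtype) (hcomp ▸ linearIndependent_vecMulVec hvw)
  have hker : 3 ≤ Module.finrank K f.ker := by simpa using hb.fintype_card_le_finrank
  have hUn : U *ᵥ n ≠ 0 := fun h0 => crossProduct_ne_zero_iff_linearIndependent.mpr hvw
    (eq_zero_of_mulVec_eq_zero hUdet.ne_zero h0)
  intro A hA
  exact apply_mem_span_singleton_of_finrank_le (f := f) (by lia) (u := ⟨U, hU⟩) hUn ⟨A, hA⟩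

theorem IsReciprocalPair.exists_common_eigenvector [IsAlgClosed K] (h : IsReciprocalPair L M)
    (hsymm : ∀ X ∈ L, X.IsSymm) (hdim : Module.finrank K L = 4) (hU : U ∈ L)
    (hUdet : IsUnit U.det) :
    ∃ n : Fin 3 → K, n ≠ 0 ∧ ∀ A ∈ L, A *ᵥ n ∈ Submodule.span K {U *ᵥ n} := by
  have : Infinite K := IsAlgClosed.instInfinite
  obtain ⟨v, hv, hvL⟩ := h.exists_vecMulVec_mem hsymm (by lia)
  have hUv : U *ᵥ U⁻¹ *ᵥ v = v := by rw [mulVec_mulVec, mul_nonsing_inv _ hUdet, one_mulVec]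
  by_cases hpar : ∀ A ∈ L, A *ᵥ U⁻¹ *ᵥ v ∈ Submodule.span K {v}
  · refine ⟨U⁻¹ *ᵥ v, fun h0 => hv ?_, by rwa [hUv]⟩
    rw [← hUv, h0, mulVec_zero]
  push Not at hpar
  obtain ⟨A, hA, hAv⟩ := hpar
  set w := A *ᵥ U⁻¹ *ᵥ v
  have hvw : LinearIndependent K ![v, w] := (LinearIndependent.pair_iff' hv).mpr fun c hc =>
    hAv (Submodule.mem_span_singleton.mpr ⟨c, hc⟩)
  have hmem {B} (hB : B ∈ L) := h.vecMulVec_mulVec_mem hB (hsymm B hB) hU (hsymm U hU) hUdet hvL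
  have hwL : vecMulVec w w ∈ L := hmem hA
  have hsumL : vecMulVec (v + w) (v + w) ∈ L := by
    simpa only [add_mulVec, hUv] using hmem (add_mem hU hA)
  have hvwL : vecMulVec v w + vecMulVec w v ∈ L := by
    have hpolar : vecMulVec v w + vecMulVec w v =
        vecMulVec (v + w) (v + w) - vecMulVec v v - vecMulVec w w := by
      simp only [vecMulVec_add, add_vecMulVec]
      abel
    exact hpolar ▸ sub_mem (sub_mem hsumL hvL) hwL
  exact ⟨v ⨯₃ w, crossProduct_ne_zero_iff_linearIndependent.mpr hvw,
    mulVec_crossProduct_mem_span hdim.le hU hUdet hvw hvL hwL hvwL⟩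

end CommonEigenvector

theorem isReciprocalPair_of_recipVar_eq {n : ℕ} {L M : Submodule ℂ (Mat n)}
    (hreg : ∃ X ∈ L, IsUnit X.det) (hM : recipVar L = M) : IsReciprocalPair L M where
  exists_isUnit_det := hreg
  inv_mem_right X hX hdet := by
    have hmem : X⁻¹ ∈ recipVar L := subset_closure ⟨X, hX, hdet, rfl⟩
    rwa [hM] at hmem
  inv_mem_left Y hY hdet := by
    have hcont : ContinuousAt Inv.inv Y := continuousAt_matrix_inv Y <| by
      rw [Ring.inverse_eq_inv']
      exact continuousAt_inv₀ hdet.ne_zero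
    have hmaps : Set.MapsTo Inv.inv {Y : Mat n | ∃ X ∈ L, IsUnit X.det ∧ Y = X⁻¹} L := by
      rintro _ ⟨X, hX, hXdet, rfl⟩
      rwa [nonsing_inv_nonsing_inv X hXdet]
    have hYmem : Y ∈ recipVar L := hM ▸ hY
    have hclosed : IsClosed (L : Set (Mat n)) := L.closed_of_finiteDimensional
    have hYinv : Y⁻¹ ∈ closure (L : Set (Mat n)) :=
      hcont.continuousWithinAt.mem_closure hYmem hmaps
    rwa [hclosed.closure_eq] at hYinv

section Frame

theorem det_of_cons_crossProduct_cons {R : Type*} [CommRing R] (q m z u : Fin 3 → R) :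
    (of ![q, m ⨯₃ z, u]).det = (u ⬝ᵥ m) * (q ⬝ᵥ z) - (q ⬝ᵥ m) * (u ⬝ᵥ z) := by
  simp [det_fin_three, cross_apply, dotProduct, Fin.sum_univ_three]
  ring

theorem exists_isUnit_det_of_dotProduct_ne_zero {K : Type*} [Field K] {q m u : Fin 3 → K}
    (hq : q ⬝ᵥ m ≠ 0) (hu : u ≠ 0) (hum : u ⬝ᵥ m = 0) :
    ∃ p, p ⬝ᵥ m = 0 ∧ IsUnit (of ![q, p, u]).det := by
  obtain ⟨i, hi⟩ := Function.ne_iff.mp hu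
  refine ⟨m ⨯₃ Pi.single i 1, by rw [dotProduct_comm, dot_self_cross], ?_⟩
  rw [det_of_cons_crossProduct_cons, hum, zero_mul, zero_sub, dotProduct_single_one]
  exact (neg_ne_zero.mpr (mul_ne_zero hq hi)).isUnit

end Frame

section MulMulTranspose

variable {R l : Type*} [CommRing R] [Fintype l] {P A : Matrix l l R}

theorem isSymm_mul_mul_transpose (P : Matrix l l R) (hA : A.IsSymm) : (P * A * Pᵀ).IsSymm := by
  rw [IsSymm, transpose_mul, transpose_mul, transpose_transpose, hA.eq, Matrix.mul_assoc]

theorem mul_mul_transpose_apply_eq_zero {m : l → R} {i j : l} (hm : P i ⬝ᵥ m = 0)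
    (hA : A *ᵥ P j ∈ Submodule.span R {m}) : (P * A * Pᵀ) i j = 0 := by
  obtain ⟨c, hc⟩ := Submodule.mem_span_singleton.mp hA
  rw [mul_mul_apply, transpose_transpose, ← hc, dotProduct_smul, hm, smul_zero]

end MulMulTranspose

section Congruence

variable {n : ℕ} {L L' L'' : Submodule ℂ (Mat n)}

/-- Congruence of matrix spaces: `L' = P L Pᵀ` for some invertible `P`. -/
def IsCongruent (L L' : Submodule ℂ (Mat n)) : Prop :=
  ∃ P : Mat n, IsUnit P.det ∧ Submodule.map (congMap P) L = L'

theorem congMap_mul (P Q : Mat n) : congMap (P * Q) = congMap P ∘ₗ congMap Q := by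
  ext1 X
  simp [congMap, mul_assoc]

theorem congMap_one : congMap (1 : Mat n) = LinearMap.id := by
  ext1 X
  simp [congMap]

theorem congMap_injective {P : Mat n} (hP : IsUnit P.det) : Function.Injective (congMap P) := by
  refine Function.LeftInverse.injective (g := congMap P⁻¹) fun X => ?_
  rw [← LinearMap.comp_apply, ← congMap_mul, nonsing_inv_mul _ hP, congMap_one, LinearMap.id_apply]

namespace IsCongruent

theorem symm (h : IsCongruent L L') : IsCongruent L' L := by
  obtain ⟨P, hP, rfl⟩ := h
  refine ⟨P⁻¹, isUnit_nonsing_inv_det P hP, ?_⟩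
  rw [← Submodule.map_comp, ← congMap_mul, nonsing_inv_mul _ hP, congMap_one, Submodule.map_id]

theorem trans (h : IsCongruent L L') (h' : IsCongruent L' L'') : IsCongruent L L'' := by
  obtain ⟨P, hP, rfl⟩ := h
  obtain ⟨Q, hQ, rfl⟩ := h'
  refine ⟨Q * P, by rw [det_mul]; exact hQ.mul hP, ?_⟩
  rw [congMap_mul, Submodule.map_comp]

theorem of_forall_mem {P : Mat n} (hP : IsUnit P.det) (hmem : ∀ A ∈ L, P * A * Pᵀ ∈ L')
    (hdim : Module.finrank ℂ L' ≤ Module.finrank ℂ L) : IsCongruent L L' := by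
  refine ⟨P, hP, Submodule.eq_of_le_of_finrank_le (Submodule.map_le_iff_le_comap.mpr hmem) ?_⟩
  rwa [← (Submodule.equivMapOfInjective _ (congMap_injective hP) L).finrank_eq]

end IsCongruent

end Congruence

section Copencil

theorem finrank_span_le_four {K V : Type*} [Field K] [AddCommGroup V] [Module K V]
    (a b c d : V) : Module.finrank K (Submodule.span K {a, b, c, d}) ≤ 4 := by
  classical
  have h := (finrank_span_finset_le_card (R := K) {a, b, c, d}).trans Finset.card_le_four
  rwa [Finset.coe_insert, Finset.coe_insert, Finset.coe_insert, Finset.coe_singleton] at h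

variable {X : Mat 3} {L : Submodule ℂ (Mat 3)} {n m : Fin 3 → ℂ}

theorem mem_copencil1_iff : X ∈ copencil1 ↔ X.IsSymm ∧ X 1 0 = 0 ∧ X 2 0 = 0 := by
  simp only [copencil1, Submodule.mem_span_insert, Submodule.mem_span_singleton]
  constructor
  · rintro ⟨x, _, ⟨y, _, ⟨z, _, ⟨w, rfl⟩, rfl⟩, rfl⟩, rfl⟩
    simp [IsSymm.ext_iff, Fin.forall_fin_succ]
  · rintro ⟨hsymm, h10, h20⟩
    refine ⟨X 0 0, _, ⟨X 1 1, _, ⟨X 2 2, _, ⟨X 1 2, rfl⟩, rfl⟩, rfl⟩, ?_⟩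
    have h01 := hsymm.apply 1 0
    have h02 := hsymm.apply 2 0
    have h21 := hsymm.apply 1 2
    ext i j
    fin_cases i <;> fin_cases j <;> simp [*]

theorem mem_copencil2_iff : X ∈ copencil2 ↔ X.IsSymm ∧ X 1 2 = 0 ∧ X 2 2 = 0 := by
  simp only [copencil2, Submodule.mem_span_insert, Submodule.mem_span_singleton]
  constructor
  · rintro ⟨x, _, ⟨y, _, ⟨z, _, ⟨w, rfl⟩, rfl⟩, rfl⟩, rfl⟩
    simp [IsSymm.ext_iff, Fin.forall_fin_succ]
  · rintro ⟨hsymm, h12, h22⟩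
    refine ⟨X 0 0, _, ⟨X 0 1, _, ⟨X 1 1, _, ⟨X 0 2, rfl⟩, rfl⟩, rfl⟩, ?_⟩
    have h10 := hsymm.apply 0 1
    have h20 := hsymm.apply 0 2
    have h21 := hsymm.apply 1 2
    ext i j
    fin_cases i <;> fin_cases j <;> simp [*]

theorem not_isCongruent_copencil1_copencil2 : ¬ IsCongruent copencil1 copencil2 := by
  rintro ⟨P, hP, hmap⟩
  have hrow : ∀ i, P 2 i = 0 := by
    intro i
    have hi : vecMulVec (Pi.single i 1) (Pi.single i 1) ∈ copencil1 := by
      fin_cases i <;> simp [mem_copencil1_iff, IsSymm, vecMulVec_apply, transpose_vecMulVec]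
    have hPi : congMap P (vecMulVec (Pi.single i 1) (Pi.single i 1)) ∈ copencil2 :=
      hmap ▸ Submodule.mem_map_of_mem hi
    have hsq := (mem_copencil2_iff.mp hPi).2.2
    simpa [congMap, mul_vecMulVec, vecMulVec_mul, vecMulVec_apply, vecMul_transpose] using hsq
  exact hP.ne_zero (det_eq_zero_of_row_eq_zero 2 hrow)

theorem isCongruent_copencil1_of_dotProduct_ne_zero (hsymm : ∀ A ∈ L, A.IsSymm)
    (hdim : 4 ≤ Module.finrank ℂ L) (heigen : ∀ A ∈ L, A *ᵥ n ∈ Submodule.span ℂ {m})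
    (hnm : n ⬝ᵥ m ≠ 0) : IsCongruent L copencil1 := by
  obtain ⟨u, hu, hum⟩ := exists_ne_zero_dotProduct_eq_zero m
  obtain ⟨p, hpm, hdet⟩ := exists_isUnit_det_of_dotProduct_ne_zero hnm hu hum
  refine .of_forall_mem hdet (fun A hA => ?_) ((finrank_span_le_four _ _ _ _).trans hdim)
  exact mem_copencil1_iff.mpr ⟨isSymm_mul_mul_transpose _ (hsymm A hA),
    mul_mul_transpose_apply_eq_zero hpm (heigen A hA),
    mul_mul_transpose_apply_eq_zero hum (heigen A hA)⟩

theorem isCongruent_copencil2_of_dotProduct_eq_zero (hsymm : ∀ A ∈ L, A.IsSymm)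
    (hdim : 4 ≤ Module.finrank ℂ L) (heigen : ∀ A ∈ L, A *ᵥ n ∈ Submodule.span ℂ {m}) (hn : n ≠ 0)
    (hm : m ≠ 0) (hnm : n ⬝ᵥ m = 0) : IsCongruent L copencil2 := by
  obtain ⟨q, hqm⟩ : ∃ q : Fin 3 → ℂ, q ⬝ᵥ m ≠ 0 := by
    by_contra! h
    exact hm (dotProduct_eq_zero_iff.mp fun q => by rw [dotProduct_comm, h])
  obtain ⟨p, hpm, hdet⟩ := exists_isUnit_det_of_dotProduct_ne_zero hqm hn hnm
  refine .of_forall_mem hdet (fun A hA => ?_) ((finrank_span_le_four _ _ _ _).trans hdim)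
  exact mem_copencil2_iff.mpr ⟨isSymm_mul_mul_transpose _ (hsymm A hA),
    mul_mul_transpose_apply_eq_zero hpm (heigen A hA),
    mul_mul_transpose_apply_eq_zero hnm (heigen A hA)⟩

end Copencil

/-- Every Jordan copencil in `S³` — a regular `4`-dimensional subspace of symmetric
`3 × 3` matrices whose reciprocal variety is a linear space — is congruent to
exactly one of `L₁ = [[x,0,0],[0,y,w],[0,w,z]]` and `L₂ = [[x,y,w],[y,z,0],[w,0,0]]`. -/
theorem stmt13 (L : Submodule ℂ (Mat 3))
    (hsym : ∀ X ∈ L, Matrix.IsSymm X)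
    (hreg : ∃ X ∈ L, IsUnit (Matrix.det X))
    (hdim : Module.finrank ℂ L = 4)
    (hlin : ∃ M : Submodule ℂ (Mat 3), recipVar L = (M : Set (Mat 3))) :
    Xor' (∃ P : Mat 3, IsUnit P.det ∧ Submodule.map (congMap P) L = copencil1)
         (∃ P : Mat 3, IsUnit P.det ∧ Submodule.map (congMap P) L = copencil2) := by
  obtain ⟨M, hM⟩ := hlin
  have hpair : IsReciprocalPair L M := isReciprocalPair_of_recipVar_eq hreg hM
  obtain ⟨U, hU, hUdet⟩ := hreg
  obtain ⟨n, hn, heigen⟩ := hpair.exists_common_eigenvector hsym hdim hU hUdet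
  have hUn : U *ᵥ n ≠ 0 := fun h0 => hn (eq_zero_of_mulVec_eq_zero hUdet.ne_zero h0)
  have hexcl (h₁ : IsCongruent L copencil1) (h₂ : IsCongruent L copencil2) : False :=
    not_isCongruent_copencil1_copencil2 (h₁.symm.trans h₂)
  by_cases hnUn : n ⬝ᵥ U *ᵥ n = 0
  · have h₂ : IsCongruent L copencil2 :=
      isCongruent_copencil2_of_dotProduct_eq_zero hsym hdim.ge heigen hn hUn hnUn
    exact Or.inr ⟨h₂, fun h₁ => hexcl h₁ h₂⟩
  · have h₁ : IsCongruent L copencil1 :=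
      isCongruent_copencil1_of_dotProduct_ne_zero hsym hdim.ge heigen hnUn
    exact Or.inl ⟨h₁, fun h₂ => hexcl h₁ h₂⟩
end
end

section
/- Let L ⊆ Sⁿ be a 3-dimensional Jordan subalgebra of (Sⁿ, •_U) with invertible unit U ∈ L, admitting a basis {U, X, Y} with X •_U X = X, Y •_U Y = Y and X •_U Y = 0 (type 1(a)). Then there exist integers k₁ ≥ k₂ ≥ k₃ ≥ 1 with k₁ + k₂ + k₃ = n and an invertible P ∈ GL(n, ℂ) such that P L Pᵀ = {Diag(x·1_{k₁}, y·1_{k₂}, z·1_{k₃}) : x, y, z ∈ ℂ}. -/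
open Matrix

noncomputable section

/-- The Jordan product on symmetric matrices with unit `U`. -/
def jmul {n : ℕ} (U X Y : Mat n) : Mat n :=
  (1 / 2 : ℂ) • (X * U⁻¹ * Y + Y * U⁻¹ * X)

/-- The diagonal `0/1` matrix with ones exactly in the diagonal positions `i` with
`a ≤ i < b`. -/
def diagBlk (n a b : ℕ) : Mat n :=
  Matrix.of fun i j => if i = j ∧ a ≤ (i : ℕ) ∧ (i : ℕ) < b then 1 else 0

/-!
The Jordan idempotents `X`, `Y` and `U - X - Y` become a complete system of orthogonal idempotents
of the matrix ring after multiplication by `U⁻¹` on the right. Factor each of them as `A * Aᵀ` with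
`A` of full column rank. Orthogonality and idempotence say that the columns of all these factors
together are orthonormal for the bilinear form of `U⁻¹`, and completeness says that there are `n` of
them. So the matrix of all these columns is invertible, and its inverse carries each of the three
idempotents to the projection onto its own block of coordinates. The blocks are ordered by rank.
-/

section CommRing

variable {R ι m n p : Type*} [CommRing R] {k : ι → Type*}

/-- The matrix whose columns are those of all the `A i`: the columns of `A i` are the ones indexed
by the pairs `⟨i, a⟩`. -/
def sigmaCols (A : ∀ i, Matrix n (k i) R) : Matrix n (Σ i, k i) R :=
  Matrix.of fun a j ↦ A j.1 a j.2

theorem sigmaCols_mul_diagonal_mul_transpose [Fintype ι] [DecidableEq ι] [∀ i, Fintype (k i)]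
    [∀ i, DecidableEq (k i)] (A : ∀ i, Matrix n (k i) R) (c : ι → R) :
    sigmaCols A * diagonal (fun j : Σ i, k i ↦ c j.1) * (sigmaCols A)ᵀ =
      ∑ i, c i • (A i * (A i)ᵀ) := by
  ext a b
  rw [mul_apply, Fintype.sum_sigma, Matrix.sum_apply]
  simp only [mul_diagonal]
  simp only [sigmaCols, transpose_apply, of_apply, Matrix.smul_apply, mul_apply, smul_eq_mul,
    Finset.mul_sum]
  exact Finset.sum_congr rfl fun i _ ↦ Finset.sum_congr rfl fun j _ ↦ by ring

variable [Fintype n]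

theorem transpose_sigmaCols_mul_mul_eq_one [DecidableEq ι] [∀ i, DecidableEq (k i)]
    {A : ∀ i, Matrix n (k i) R} {V : Matrix n n R} (hself : ∀ i, (A i)ᵀ * V * A i = 1)
    (hne : ∀ i j, i ≠ j → (A i)ᵀ * V * A j = 0) :
    (sigmaCols A)ᵀ * V * sigmaCols A = 1 := by
  ext ⟨i, a⟩ ⟨j, b⟩
  change ((A i)ᵀ * V * A j) a b = _
  obtain rfl | hij := eq_or_ne i j
  · simp [hself, Matrix.one_apply]
  · simp [hne i j hij, hij]

theorem transpose_mul_mul_eq_of_left_inverses [Fintype m] [DecidableEq m] [Fintype p]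
    [DecidableEq p] {A : Matrix n m R} {B : Matrix m n R} {C : Matrix n p R} {D : Matrix p n R}
    (hBA : B * A = 1) (hDC : D * C = 1) (V : Matrix n n R) :
    Aᵀ * V * C = B * (A * Aᵀ * V * (C * Cᵀ)) * Dᵀ :=
  have hCD : Cᵀ * Dᵀ = 1 := by rw [← transpose_mul, hDC, transpose_one]
  calc Aᵀ * V * C = B * A * (Aᵀ * V * C) * (Cᵀ * Dᵀ) := by
        rw [hBA, hCD, Matrix.one_mul, Matrix.mul_one]
    _ = B * (A * Aᵀ * V * (C * Cᵀ)) * Dᵀ := by simp only [Matrix.mul_assoc]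

theorem mul_mul_transpose_eq_of_left_inverse [Fintype m] [DecidableEq m] {P : Matrix m n R}
    {A : Matrix n m R} (hPA : P * A = 1) {D : Matrix m m R} {M : Matrix n n R}
    (hM : A * D * Aᵀ = M) : P * M * Pᵀ = D :=
  calc P * M * Pᵀ = P * A * D * (P * A)ᵀ := by
        simp only [← hM, transpose_mul, Matrix.mul_assoc]
    _ = D := by rw [hPA, transpose_one, Matrix.one_mul, Matrix.mul_one]

end CommRing

section Field

variable {K ι n : Type*} [Field K] [Fintype n]

theorem rank_pos_of_ne_zero {M : Matrix n n K} (hM : M ≠ 0) : 0 < M.rank := by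
  classical
  refine Nat.pos_of_ne_zero fun h ↦ hM ?_
  rw [Matrix.rank, Submodule.finrank_eq_zero, LinearMap.range_eq_bot] at h
  exact toLin'.map_eq_zero_iff.mp h

theorem exists_mul_mul_transpose_eq_diagonal [DecidableEq n] [NeZero (2 : K)]
    {M : Matrix n n K} (hM : M.IsSymm) :
    ∃ P : Matrix n n K, IsUnit P.det ∧ ∃ d : n → K, P * M * Pᵀ = diagonal d := by
  have : Invertible (2 : K) := invertibleOfNonzero two_ne_zero
  obtain ⟨v, hv⟩ := LinearMap.BilinForm.exists_orthogonal_basis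
    (LinearMap.BilinForm.isSymm_iff.mp (isSymm_toBilin'_iff_isSymm.mpr hM))
  let b := v.reindex (v.indexEquiv (Pi.basisFun K n))
  have hb (i j) : (Matrix.of b * M * (Matrix.of b)ᵀ) i j = toBilin' M (b i) (b j) := by
    rw [toBilin'_apply', Matrix.mul_assoc, mul_apply]
    rfl
  refine ⟨Matrix.of b, ?_, fun i ↦ toBilin' M (b i) (b i), ?_⟩
  · exact (isUnit_iff_isUnit_det _).mp (linearIndependent_rows_iff_isUnit.mp b.linearIndependent)
  · ext i j
    rw [hb]
    obtain rfl | hij := eq_or_ne i j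
    · rw [diagonal_apply_eq]
    · rw [diagonal_apply_ne _ hij]
      simpa [b] using hv ((v.indexEquiv (Pi.basisFun K n)).symm.injective.ne hij)

theorem exists_diagonal_eq_mul_transpose [DecidableEq n] (hK : ∀ a : K, IsSquare a)
    (d : n → K) :
    ∃ (A : Matrix n (Fin (diagonal d).rank) K) (B : Matrix (Fin (diagonal d).rank) n K),
      A * Aᵀ = diagonal d ∧ B * A = 1 := by
  classical
  choose q hq using fun i ↦ hK (d i)
  have hcard : Fintype.card (Fin (diagonal d).rank) = Fintype.card {i // d i ≠ 0} := by
    rw [Fintype.card_fin, rank_diagonal]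
  let e := Fintype.equivOfCardEq hcard
  let f : Fin (diagonal d).rank → n := fun a ↦ e a
  have hf : Function.Injective f := Subtype.val_injective.comp e.injective
  have hq_ne (a) : q (f a) ≠ 0 := left_ne_zero_of_mul (hq (f a) ▸ (e a).2)
  have hq_zero (i) (hi : i ∉ Set.range f) : q i = 0 := by
    by_contra h
    exact hi ⟨e.symm ⟨i, by simpa [hq] using h⟩, by simp [f]⟩
  refine ⟨(diagonal q).submatrix id f, (diagonal q⁻¹).submatrix f id, ?_, ?_⟩
  · calc (diagonal q).submatrix id f * ((diagonal q).submatrix id f)ᵀ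
        = diagonal q * (diagonal q)ᵀ := by
          ext i j
          refine Fintype.sum_of_injective f hf _ _ (fun l hl ↦ ?_) fun _ ↦ rfl
          obtain rfl | hil := eq_or_ne i l
          · simp [hq_zero i hl]
          · simp [hil]
      _ = diagonal d := by
          rw [diagonal_transpose, diagonal_mul_diagonal]
          exact congrArg diagonal (funext fun i ↦ (hq i).symm)
  · rw [← submatrix_mul _ _ f id f Function.bijective_id, diagonal_mul_diagonal,
      submatrix_diagonal _ f hf, ← diagonal_one]
    exact congrArg diagonal (funext fun a ↦ inv_mul_cancel₀ (hq_ne a))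

variable [NeZero (2 : K)]

theorem exists_eq_mul_transpose (hK : ∀ a : K, IsSquare a) {M : Matrix n n K} (hM : M.IsSymm) :
    ∃ (A : Matrix n (Fin M.rank) K) (B : Matrix (Fin M.rank) n K), A * Aᵀ = M ∧ B * A = 1 := by
  classical
  obtain ⟨P, hP, d, hd⟩ := exists_mul_mul_transpose_eq_diagonal hM
  have hrank : (diagonal d).rank = M.rank := by
    rw [← hd, rank_mul_eq_left_of_isUnit_det _ _ (by rwa [det_transpose]),
      rank_mul_eq_right_of_isUnit_det _ _ hP]
  rw [← hrank]
  obtain ⟨C, D, hC, hDC⟩ := exists_diagonal_eq_mul_transpose hK d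
  refine ⟨P⁻¹ * C, D * P, ?_, ?_⟩
  · have hP' : Pᵀ * P⁻¹ᵀ = 1 := by rw [← transpose_mul, nonsing_inv_mul _ hP, transpose_one]
    calc P⁻¹ * C * (P⁻¹ * C)ᵀ = P⁻¹ * (C * Cᵀ) * P⁻¹ᵀ := by
          simp only [transpose_mul, Matrix.mul_assoc]
      _ = P⁻¹ * P * M * (Pᵀ * P⁻¹ᵀ) := by rw [hC, ← hd]; simp only [Matrix.mul_assoc]
      _ = M := by rw [nonsing_inv_mul _ hP, hP', Matrix.one_mul, Matrix.mul_one]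
  · rw [Matrix.mul_assoc, mul_nonsing_inv_cancel_left _ _ hP, hDC]

theorem exists_inverses_mul_mul_transpose_eq_diagonal [DecidableEq n] [Fintype ι] [DecidableEq ι]
    (hK : ∀ a : K, IsSquare a) {V : Matrix n n K} {X : ι → Matrix n n K}
    (hX : ∀ i, (X i).IsSymm) (hXV : CompleteOrthogonalIdempotents fun i ↦ X i * V) :
    ∃ (P : Matrix (Σ i, Fin (X i).rank) n K) (A : Matrix n (Σ i, Fin (X i).rank) K),
      P * A = 1 ∧ A * P = 1 ∧
      ∀ i, P * X i * Pᵀ = diagonal fun j : Σ i, Fin (X i).rank ↦ if j.1 = i then 1 else 0 := by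
  choose A B hA hBA using fun i ↦ exists_eq_mul_transpose hK (hX i)
  have hsum : (∑ i, X i) * V = 1 := by rw [Finset.sum_mul, hXV.complete]
  have hV : IsUnit V := (isUnit_iff_isUnit_det V).mpr (isUnit_det_of_left_inverse hsum)
  have hself (i) : (A i)ᵀ * V * A i = 1 := by
    have hidem : X i * V * X i = X i :=
      hV.mul_right_cancel (by rw [Matrix.mul_assoc]; exact hXV.idem i)
    rw [transpose_mul_mul_eq_of_left_inverses (hBA i) (hBA i), hA, hidem]
    calc B i * X i * (B i)ᵀ = B i * A i * (B i * A i)ᵀ := by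
          simp only [← hA, transpose_mul, Matrix.mul_assoc]
      _ = 1 := by rw [hBA, transpose_one, Matrix.one_mul]
  have hne (i j) (hij : i ≠ j) : (A i)ᵀ * V * A j = 0 := by
    have hortho : X i * V * X j = 0 :=
      hV.mul_right_cancel (by rw [Matrix.mul_assoc, zero_mul]; exact hXV.ortho hij)
    rw [transpose_mul_mul_eq_of_left_inverses (hBA i) (hBA j), hA, hA, hortho, Matrix.mul_zero,
      Matrix.zero_mul]
  have hPA := transpose_sigmaCols_mul_mul_eq_one hself hne
  have hdiag := sigmaCols_mul_diagonal_mul_transpose A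
  simp only [hA] at hdiag
  refine ⟨(sigmaCols A)ᵀ * V, sigmaCols A, hPA, ?_, fun i ↦ ?_⟩
  · simpa [← Matrix.mul_assoc, hsum] using congrArg (· * V) (hdiag 1)
  · refine mul_mul_transpose_eq_of_left_inverse hPA ?_
    simpa [Pi.single_apply] using hdiag (Pi.single i 1)

end Field

section Blocks

variable {r : ℕ} {k : Fin r → ℕ}

theorem finSigmaFinEquiv_val_eq_sum_Iio_add (x : Σ i, Fin (k i)) :
    (finSigmaFinEquiv x : ℕ) = ∑ j ∈ Finset.Iio x.1, k j + x.2 := by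
  rw [finSigmaFinEquiv_apply]
  congr 1
  refine Finset.sum_bij (fun j _ ↦ Fin.castLE x.1.2.le j) (fun j _ ↦ ?_) (fun _ _ _ _ h ↦ ?_)
    (fun j hj ↦ ⟨⟨j, by simpa using hj⟩, Finset.mem_univ _, rfl⟩) fun _ _ ↦ rfl
  · exact Finset.mem_Iio.mpr j.2
  · exact Fin.castLE_injective _ h

theorem sum_Iic_le_sum_Iio {i j : Fin r} (hij : i < j) :
    ∑ l ∈ Finset.Iic i, k l ≤ ∑ l ∈ Finset.Iio j, k l :=
  Finset.sum_le_sum_of_subset fun _ hl ↦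
    Finset.mem_Iio.mpr ((Finset.mem_Iic.mp hl).trans_lt hij)

theorem finSigmaFinEquiv_mem_Ico_iff (x : Σ i, Fin (k i)) (i : Fin r) :
    (∑ j ∈ Finset.Iio i, k j ≤ finSigmaFinEquiv x ∧
      finSigmaFinEquiv x < ∑ j ∈ Finset.Iic i, k j) ↔ x.1 = i := by
  have hx := finSigmaFinEquiv_val_eq_sum_Iio_add x
  have hIic := Finset.sum_Iio_add_eq_sum_Iic (f := k) x.1
  constructor
  · rintro ⟨hle, hlt'⟩
    obtain h | h | h := lt_trichotomy x.1 i
    · have := sum_Iic_le_sum_Iio (k := k) h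
      omega
    · exact h
    · have := sum_Iic_le_sum_Iio (k := k) h
      omega
  · rintro rfl
    have := x.2.2
    omega

end Blocks

/-- The diagonal `0/1` matrix with ones exactly in the diagonal positions `i` with `a ≤ i < b`, with
entries in an arbitrary type; over `ℂ` it is `diagBlk`. -/
def diagBlock (R : Type*) [Zero R] [One R] (n a b : ℕ) : Matrix (Fin n) (Fin n) R :=
  diagonal fun i ↦ if a ≤ (i : ℕ) ∧ (i : ℕ) < b then 1 else 0

theorem diagBlk_eq_diagBlock (n a b : ℕ) : diagBlk n a b = diagBlock ℂ n a b := by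
  ext i j
  simp only [diagBlk, diagBlock, diagonal_apply, of_apply, ite_and]

theorem coe_span_range_diagBlock_three (R : Type*) [Semiring R] {n : ℕ} {k : Fin 3 → ℕ}
    (hk : ∑ i, k i = n) :
    (Submodule.span R (Set.range fun i ↦
      diagBlock R n (∑ j ∈ Finset.Iio i, k j) (∑ j ∈ Finset.Iic i, k j)) : Set _) =
      {M | ∃ x y z : R, M = x • diagBlock R n 0 (k 0) + y • diagBlock R n (k 0) (k 0 + k 1)
        + z • diagBlock R n (k 0 + k 1) n} := by
  have hIio : (Finset.Iio : Fin 3 → Finset (Fin 3)) = ![∅, {0}, {0, 1}] := by decide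
  have hIic : (Finset.Iic : Fin 3 → Finset (Fin 3)) = ![{0}, {0, 1}, Finset.univ] := by decide
  ext M
  simp [Submodule.mem_span_range_iff_exists_fun, Fin.sum_univ_three, Fin.exists_fin_succ_pi,
    hIio, hIic, ← hk, eq_comm]

section Congruence

variable {K : Type*} [Field K] [NeZero (2 : K)] {n r : ℕ}

theorem sum_rank_eq_and_exists_congr_diagBlock (hK : ∀ a : K, IsSquare a)
    {V : Matrix (Fin n) (Fin n) K} {X : Fin r → Matrix (Fin n) (Fin n) K}
    (hX : ∀ i, (X i).IsSymm) (hXV : CompleteOrthogonalIdempotents fun i ↦ X i * V) :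
    ∑ i, (X i).rank = n ∧ ∃ P : Matrix (Fin n) (Fin n) K, IsUnit P.det ∧
      ∀ i, P * X i * Pᵀ = diagBlock K n (∑ j ∈ Finset.Iio i, (X j).rank)
        (∑ j ∈ Finset.Iic i, (X j).rank) := by
  obtain ⟨P, A, hPA, hAP, hP⟩ := exists_inverses_mul_mul_transpose_eq_diagonal hK hX hXV
  have hn : ∑ i, (X i).rank = n := by simpa using square_of_invertible P A hPA hAP
  let e := finSigmaFinEquiv.trans (finCongr hn)
  refine ⟨hn, P.submatrix e.symm id, ?_, fun i ↦ ?_⟩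
  · refine isUnit_det_of_right_inverse (B := A.submatrix id e.symm) ?_
    rw [← submatrix_mul _ _ _ _ _ Function.bijective_id, hPA, submatrix_one_equiv]
  · calc P.submatrix e.symm id * X i * (P.submatrix e.symm id)ᵀ
        = (P * X i * Pᵀ).submatrix e.symm e.symm := rfl
      _ = _ := by
        rw [hP, submatrix_diagonal_equiv]
        refine congrArg diagonal (funext fun a ↦ ?_)
        obtain ⟨x, rfl⟩ := e.surjective a
        simpa [e] using if_congr (finSigmaFinEquiv_mem_Ico_iff x i).symm rfl rfl

theorem exists_perm_antitone_comp (f : Fin r → ℕ) : ∃ σ : Equiv.Perm (Fin r), Antitone (f ∘ σ) :=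
  ⟨Tuple.sort (OrderDual.toDual ∘ f), fun _ _ h ↦ Tuple.monotone_sort (OrderDual.toDual ∘ f) h⟩

theorem exists_congr_span_eq_span_diagBlock (hK : ∀ a : K, IsSquare a)
    {V : Matrix (Fin n) (Fin n) K} {X : Fin r → Matrix (Fin n) (Fin n) K}
    (hX : ∀ i, (X i).IsSymm) (hX0 : ∀ i, X i ≠ 0)
    (hXV : CompleteOrthogonalIdempotents fun i ↦ X i * V) :
    ∃ k : Fin r → ℕ, Antitone k ∧ (∀ i, 1 ≤ k i) ∧ ∑ i, k i = n ∧
      ∃ P : Matrix (Fin n) (Fin n) K, IsUnit P.det ∧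
        (fun A ↦ P * A * Pᵀ) '' (Submodule.span K (Set.range X)) =
          Submodule.span K (Set.range fun i ↦
            diagBlock K n (∑ j ∈ Finset.Iio i, k j) (∑ j ∈ Finset.Iic i, k j)) := by
  obtain ⟨σ, hσ⟩ := exists_perm_antitone_comp fun i ↦ (X i).rank
  obtain ⟨hn, P, hPdet, hP⟩ := sum_rank_eq_and_exists_congr_diagBlock hK
    (X := X ∘ σ) (fun i ↦ hX (σ i)) ((CompleteOrthogonalIdempotents.equiv σ).mpr hXV)
  refine ⟨fun i ↦ (X (σ i)).rank, hσ, fun i ↦ rank_pos_of_ne_zero (hX0 _), hn, P, hPdet, ?_⟩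
  let φ := LinearMap.mulRight K Pᵀ ∘ₗ LinearMap.mulLeft K P
  calc (fun A ↦ P * A * Pᵀ) '' (Submodule.span K (Set.range X))
      = (Submodule.span K (Set.range X)).map φ := rfl
    _ = Submodule.span K (Set.range (φ ∘ X ∘ σ)) := by
      rw [Submodule.map_span, ← Set.range_comp, ← Function.comp_assoc, σ.surjective.range_comp]
    _ = _ := congrArg (fun Y : Fin r → Matrix (Fin n) (Fin n) K ↦
        (Submodule.span K (Set.range Y) : Set (Matrix (Fin n) (Fin n) K))) (funext hP)

end Congruence

section Jordan

/- `IsIdempotentElem.mul_eq_zero_of_anticommute` assumes that the ring is torsion-free, which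
excludes positive characteristic. -/
theorem mul_eq_zero_of_isIdempotentElem_of_anticommute {R : Type*} [Ring R]
    (h2 : IsUnit (2 : R)) {e f : R} (he : IsIdempotentElem e) (hef : e * f + f * e = 0) :
    e * f = 0 := by
  have hefe : e * f * e = 0 := h2.mul_right_eq_zero.mp <| by
    calc 2 * (e * f * e) = e * (f * (e * e)) + e * e * f * e := by
          rw [he.eq, two_mul, mul_assoc e f]
      _ = e * (e * f + f * e) * e := by noncomm_ring
      _ = 0 := by rw [hef, mul_zero, zero_mul]
  calc e * f = e * e * f + e * f * e := by rw [he.eq, hefe, add_zero]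
    _ = e * (e * f + f * e) := by noncomm_ring
    _ = 0 := by rw [hef, mul_zero]

theorem completeOrthogonalIdempotents_cons {R : Type*} [Ring R] {r : ℕ} {e : Fin r → R}
    (he : OrthogonalIdempotents e) :
    CompleteOrthogonalIdempotents (Fin.cons (1 - ∑ i, e i) e : Fin (r + 1) → R) := by
  rw [← CompleteOrthogonalIdempotents.equiv (finSuccEquiv r).symm]
  convert CompleteOrthogonalIdempotents.option he with i
  cases i <;> simp

theorem span_range_cons_sub_sum (R : Type*) {M : Type*} [Ring R] [AddCommGroup M] [Module R M]
    {r : ℕ} (u : M) (x : Fin r → M) :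
    Submodule.span R (Set.range (Fin.cons (u - ∑ i, x i) x : Fin (r + 1) → M)) =
      Submodule.span R (Set.range (Fin.cons u x : Fin (r + 1) → M)) := by
  have hsum : ∑ i, x i ∈ Submodule.span R (Set.range x) :=
    Submodule.sum_mem _ fun i _ ↦ Submodule.subset_span ⟨i, rfl⟩
  have hle := Submodule.span_mono (R := R) (Set.subset_insert u (Set.range x))
  have hle' := Submodule.span_mono (R := R) (Set.subset_insert (u - ∑ i, x i) (Set.range x))
  rw [Fin.range_cons, Fin.range_cons]
  refine Submodule.span_eq_span ?_ ?_ <;> refine Set.insert_subset ?_ ?_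
  · exact sub_mem (Submodule.mem_span_of_mem (Set.mem_insert _ _)) (hle hsum)
  · exact Submodule.subset_span.trans hle
  · simpa only [SetLike.mem_coe, sub_add_cancel] using
      add_mem (Submodule.mem_span_of_mem (Set.mem_insert _ _)) (hle' hsum)
  · exact Submodule.subset_span.trans hle'

variable {K n : Type*} [Field K] [Fintype n] [DecidableEq n]

/-- The Jordan product `X •_U Y` over an arbitrary field; over `ℂ` it is `jmul`. -/
def jordanMul (U X Y : Matrix n n K) : Matrix n n K :=
  (1 / 2 : K) • (X * U⁻¹ * Y + Y * U⁻¹ * X)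

theorem jordanMul_comm (U X Y : Matrix n n K) : jordanMul U X Y = jordanMul U Y X := by
  rw [jordanMul, jordanMul, add_comm]

theorem orthogonalIdempotents_mul_inv [NeZero (2 : K)] {ι : Type*} {U : Matrix n n K}
    {X : ι → Matrix n n K} (hidem : ∀ i, jordanMul U (X i) (X i) = X i)
    (hortho : Pairwise fun i j ↦ jordanMul U (X i) (X j) = 0) :
    OrthogonalIdempotents fun i ↦ X i * U⁻¹ := by
  have h2 : (2 : K) ≠ 0 := two_ne_zero
  have hidem' (i) : IsIdempotentElem (X i * U⁻¹) := by
    have := hidem i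
    rw [jordanMul, ← two_smul K, smul_smul, one_div_mul_cancel h2, one_smul] at this
    rw [IsIdempotentElem, ← Matrix.mul_assoc, this]
  refine ⟨hidem', fun i j hij ↦ ?_⟩
  have hUnit : IsUnit (2 : Matrix n n K) := by
    rw [← map_ofNat (algebraMap K (Matrix n n K)) 2]
    exact (IsUnit.mk0 (2 : K) h2).map _
  have hanti : X i * U⁻¹ * X j + X j * U⁻¹ * X i = 0 :=
    (smul_eq_zero.mp (hortho hij)).resolve_left (one_div_ne_zero h2)
  refine mul_eq_zero_of_isIdempotentElem_of_anticommute hUnit (hidem' i) ?_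
  rw [← Matrix.mul_assoc, ← Matrix.mul_assoc, ← Matrix.add_mul, hanti, Matrix.zero_mul]

theorem completeOrthogonalIdempotents_cons_mul_inv [NeZero (2 : K)] {r : ℕ} {U : Matrix n n K}
    (hU : IsUnit U.det) {X : Fin r → Matrix n n K}
    (hidem : ∀ i, jordanMul U (X i) (X i) = X i)
    (hortho : Pairwise fun i j ↦ jordanMul U (X i) (X j) = 0) :
    CompleteOrthogonalIdempotents fun i ↦
      (Fin.cons (U - ∑ i, X i) X : Fin (r + 1) → Matrix n n K) i * U⁻¹ := by
  have hcons : (fun i ↦ (Fin.cons (U - ∑ i, X i) X : Fin (r + 1) → Matrix n n K) i * U⁻¹) =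
      Fin.cons (1 - ∑ i, X i * U⁻¹) fun i ↦ X i * U⁻¹ := by
    funext i
    cases i using Fin.cases with
    | zero => simp only [Fin.cons_zero, Matrix.sub_mul, mul_nonsing_inv _ hU, Matrix.sum_mul]
    | succ i => simp only [Fin.cons_succ]
  rw [hcons]
  exact completeOrthogonalIdempotents_cons (orthogonalIdempotents_mul_inv hidem hortho)

theorem exists_congr_span_cons_eq_span_diagBlock [NeZero (2 : K)] (hK : ∀ a : K, IsSquare a)
    {n r : ℕ} {U : Matrix (Fin n) (Fin n) K} (hU : IsUnit U.det) (hUsymm : U.IsSymm)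
    {X : Fin r → Matrix (Fin n) (Fin n) K} (hX : ∀ i, (X i).IsSymm)
    (hindep : LinearIndependent K (Fin.cons U X : Fin (r + 1) → Matrix (Fin n) (Fin n) K))
    (hidem : ∀ i, jordanMul U (X i) (X i) = X i)
    (hortho : Pairwise fun i j ↦ jordanMul U (X i) (X j) = 0) :
    ∃ k : Fin (r + 1) → ℕ, Antitone k ∧ (∀ i, 1 ≤ k i) ∧ ∑ i, k i = n ∧
      ∃ P : Matrix (Fin n) (Fin n) K, IsUnit P.det ∧
        (fun A ↦ P * A * Pᵀ) '' (Submodule.span K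
            (Set.range (Fin.cons U X : Fin (r + 1) → Matrix (Fin n) (Fin n) K))) =
          Submodule.span K (Set.range fun i ↦
            diagBlock K n (∑ j ∈ Finset.Iio i, k j) (∑ j ∈ Finset.Iic i, k j)) := by
  obtain ⟨hXindep, hUspan⟩ := linearIndependent_finCons.mp hindep
  have hUX : U - ∑ i, X i ≠ 0 := sub_ne_zero.mpr fun h ↦ hUspan <|
    h ▸ Submodule.sum_mem _ fun i _ ↦ Submodule.subset_span ⟨i, rfl⟩
  have hsum : (∑ i, X i).IsSymm := by
    rw [IsSymm, transpose_sum]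
    exact Finset.sum_congr rfl fun i _ ↦ hX i
  rw [← span_range_cons_sub_sum]
  exact exists_congr_span_eq_span_diagBlock hK (Fin.cases (hUsymm.sub hsum) hX)
    (Fin.cases hUX hXindep.ne_zero) (completeOrthogonalIdempotents_cons_mul_inv hU hidem hortho)

end Jordan

theorem stmt15_general {K : Type*} [Field K] [NeZero (2 : K)] (hK : ∀ a : K, IsSquare a)
    {n : ℕ} {U X Y : Matrix (Fin n) (Fin n) K} (hU : IsUnit U.det) (hUsymm : U.IsSymm)
    (hXsymm : X.IsSymm) (hYsymm : Y.IsSymm) (hindep : LinearIndependent K ![U, X, Y])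
    (hXX : jordanMul U X X = X) (hYY : jordanMul U Y Y = Y) (hXY : jordanMul U X Y = 0) :
    ∃ k₁ k₂ k₃ : ℕ, k₁ ≥ k₂ ∧ k₂ ≥ k₃ ∧ k₃ ≥ 1 ∧ k₁ + k₂ + k₃ = n ∧
      ∃ P : Matrix (Fin n) (Fin n) K, IsUnit P.det ∧
        (fun A ↦ P * A * Pᵀ) '' (Submodule.span K {U, X, Y}) =
          {M | ∃ x y z : K, M = x • diagBlock K n 0 k₁ + y • diagBlock K n k₁ (k₁ + k₂)
            + z • diagBlock K n (k₁ + k₂) n} := by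
  have hYX : jordanMul U Y X = 0 := by rw [jordanMul_comm, hXY]
  obtain ⟨k, hanti, hpos, hsum, P, hP, himage⟩ := exists_congr_span_cons_eq_span_diagBlock hK hU
    hUsymm (X := ![X, Y]) (by simp [Fin.forall_fin_two, hXsymm, hYsymm]) hindep
    (by simp [Fin.forall_fin_two, hXX, hYY]) (by simp [Pairwise, Fin.forall_fin_two, hXY, hYX])
  have hrange : Set.range (Fin.cons U ![X, Y] : Fin 3 → Matrix (Fin n) (Fin n) K) = {U, X, Y} := by
    rw [Fin.range_cons, range_cons_cons_empty]
  rw [hrange, coe_span_range_diagBlock_three K hsum] at himage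
  exact ⟨k 0, k 1, k 2, hanti (by decide), hanti (by decide), hpos 2,
    (Fin.sum_univ_three k).symm.trans hsum, P, hP, himage⟩

/-- Every Jordan net in `Sⁿ` of type 1(a) (basis `{U, X, Y}` with `X•X = X`,
`Y•Y = Y`, `X•Y = 0`) is congruent to the diagonal net
`Diag(x·1_{k₁}, y·1_{k₂}, z·1_{k₃})` for some `k₁ ≥ k₂ ≥ k₃ ≥ 1` with
`k₁ + k₂ + k₃ = n`. -/
theorem stmt15 {n : ℕ} (U : Mat n) (hU : IsUnit U.det)
    (L : Submodule ℂ (Mat n)) (hsym : ∀ X ∈ L, Matrix.IsSymm X)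
    (hUL : U ∈ L) (hclosed : ∀ X ∈ L, ∀ Y ∈ L, jmul U X Y ∈ L)
    (hdim : Module.finrank ℂ L = 3)
    (X Y : Mat n) (hX : X ∈ L) (hY : Y ∈ L)
    (hbasis : LinearIndependent ℂ ![U, X, Y])
    (hspan : Submodule.span ℂ {U, X, Y} = L)
    (hXX : jmul U X X = X) (hYY : jmul U Y Y = Y) (hXY : jmul U X Y = 0) :
    ∃ k₁ k₂ k₃ : ℕ, k₁ ≥ k₂ ∧ k₂ ≥ k₃ ∧ k₃ ≥ 1 ∧ k₁ + k₂ + k₃ = n ∧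
      ∃ P : Mat n, IsUnit P.det ∧
        (fun A => P * A * Pᵀ) '' (L : Set (Mat n)) =
          {M : Mat n | ∃ x y z : ℂ,
            M = x • diagBlk n 0 k₁ + y • diagBlk n k₁ (k₁ + k₂)
              + z • diagBlk n (k₁ + k₂) n} := by
  subst hspan
  simpa only [diagBlk_eq_diagBlock] using stmt15_general IsAlgClosed.exists_eq_mul_self hU
    (hsym U hUL) (hsym X hX) (hsym Y hY) hbasis hXX hYY hXY
end
end

section
/- Let L ⊆ Sⁿ be a 3-dimensional Jordan subalgebra of (Sⁿ, •_U) with invertible unit U ∈ L, admitting a basis {U, X, Y} with X •_U X = U, Y •_U Y = U and X •_U Y = 0 (type 1(b)). Then n is even, and there exists an invertible P ∈ GL(n, ℂ) such that P L Pᵀ = {1_{n/2} ⊗ A : A a symmetric 2×2 complex matrix}, the set of block-diagonal matrices consisting of n/2 identical symmetric 2×2 blocks. -/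
open Matrix

noncomputable section

/-- The Kronecker product `1_{n/2} ⊗ A` for a `2 × 2` matrix `A`: the `n × n`
block-diagonal matrix whose consecutive `2 × 2` diagonal blocks all equal `A`. -/
def blockRep (n : ℕ) (A : Matrix (Fin 2) (Fin 2) ℂ) : Mat n :=
  Matrix.of fun i j =>
    if (i : ℕ) / 2 = (j : ℕ) / 2 then
      A ⟨(i : ℕ) % 2, by omega⟩ ⟨(j : ℕ) % 2, by omega⟩
    else 0

/-!
Put `S = U⁻¹X` and `T = U⁻¹Y`. The product relations say that `S` and `T` are anticommuting
involutions, and both are self-adjoint for the bilinear form `U`. Since `T` exchanges the two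
eigenspaces of `S`, the space splits as `E ⊕ T E` with `E` the fixed space of `S`, so its dimension
is even. The sum is orthogonal because `S` is self-adjoint, so `U` is nondegenerate on `E` and has
an orthonormal basis `vᵢ` there. In the basis `v₁, T v₁, v₂, T v₂, …` the forms `U`, `X`, `Y`
consist of diagonal blocks `1`, `diag(1, -1)`, `antidiag(1, 1)`, which span the symmetric `2 × 2`
matrices.
-/

open Module
open scoped Kronecker

theorem one_ne_neg_one {R : Type*} [Ring R] [Nontrivial R] [Invertible (2 : R)] : (1 : R) ≠ -1 :=
  fun h => Invertible.ne_zero (2 : R) (by rw [← one_add_one_eq_two, eq_neg_iff_add_eq_zero.mp h])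

theorem apply_eq_zero_of_mem_eigenspace_of_isSelfAdjoint {R V : Type*} [CommRing R] [IsDomain R]
    [AddCommGroup V] [Module R V] {B : LinearMap.BilinForm R V} {S : End R V}
    (hS : B.IsSelfAdjoint S) {a b : R} (hab : a ≠ b) {x y : V} (hx : x ∈ S.eigenspace a)
    (hy : y ∈ S.eigenspace b) : B x y = 0 := by
  rw [End.mem_eigenspace_iff] at hx hy
  have h : a * B x y = b * B x y := by simpa [hx, hy] using hS x y
  exact (mul_eq_mul_right_iff.mp h).resolve_left hab

theorem exists_basis_toMatrix_eq_one {K V : Type*} [Field K] [Invertible (2 : K)]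
    [AddCommGroup V] [Module K V] [FiniteDimensional K V] {B : LinearMap.BilinForm K V}
    (hsq : ∀ a : K, IsSquare a) (hB : B.Nondegenerate) (hsymm : B.IsSymm) :
    ∃ b : Basis (Fin (finrank K V)) K V, LinearMap.BilinForm.toMatrix b B = 1 := by
  obtain ⟨v, hv⟩ :=
    LinearMap.BilinForm.exists_orthogonal_basis (LinearMap.BilinForm.isSymm_iff.mp hsymm)
  have hvv (i) : B (v i) (v i) ≠ 0 := hv.not_isOrtho_basis_self_of_separatingLeft hB.1 i
  choose c hc using fun i => hsq (B (v i) (v i))⁻¹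
  have hc0 (i) : c i ≠ 0 := fun h => hvv i (by simpa [h] using hc i)
  refine ⟨v.isUnitSMul fun i => (hc0 i).isUnit, ?_⟩
  ext i j
  rw [LinearMap.BilinForm.toMatrix_apply, Basis.isUnitSMul_apply, Basis.isUnitSMul_apply,
    LinearMap.BilinForm.smul_left, LinearMap.BilinForm.smul_right]
  obtain rfl | hij := eq_or_ne i j
  · rw [one_apply_eq, ← mul_assoc, ← hc, inv_mul_cancel₀ (hvv i)]
  · have hvij : B (v i) (v j) = 0 := hv hij
    rw [hvij, mul_zero, mul_zero, one_apply_ne hij]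

/-- A pair of anticommuting linear involutions of `V`, i.e. a representation on `V` of the algebra
of `2 × 2` matrices in its Clifford presentation by `S = diag(1, -1)` and `T = antidiag(1, 1)`. -/
structure AnticommutingInvolutions {R V : Type*} [CommRing R] [AddCommGroup V] [Module R V]
    (S T : End R V) : Prop where
  involutive_left : Function.Involutive S
  involutive_right : Function.Involutive T
  anticomm : ∀ x, S (T x) = -T (S x)

/-- The family `vᵢ, T vᵢ`, indexed by `κ × Fin 2`. When the `vᵢ` are a basis of the fixed space of
`S`, it decomposes `V` into copies of the standard representation of the pair `S`, `T`. -/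
def doubledFamily {R V κ : Type*} [CommRing R] [AddCommGroup V] [Module R V]
    (T : End R V) (v : κ → V) (p : κ × Fin 2) : V :=
  ![v p.1, T (v p.1)] p.2

namespace AnticommutingInvolutions

section IsDomain

variable {R V : Type*} [CommRing R] [AddCommGroup V] [Module R V] {S T : End R V}
  {B : LinearMap.BilinForm R V}

theorem map_eigenspace_one_le (h : AnticommutingInvolutions S T) :
    (S.eigenspace 1).map T ≤ S.eigenspace (-1) := by
  rintro _ ⟨x, hx, rfl⟩
  rw [SetLike.mem_coe, End.mem_eigenspace_iff, one_smul] at hx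
  rw [End.mem_eigenspace_iff, h.anticomm, hx, neg_one_smul]

variable [IsDomain R] [Invertible (2 : R)]

theorem apply_apply_eq_zero_of_mem_eigenspace_one (h : AnticommutingInvolutions S T)
    (hS : B.IsSelfAdjoint S) {x y : V} (hx : x ∈ S.eigenspace 1) (hy : y ∈ S.eigenspace 1) :
    B x (T y) = 0 :=
  apply_eq_zero_of_mem_eigenspace_of_isSelfAdjoint hS one_ne_neg_one hx
    (h.map_eigenspace_one_le (Submodule.mem_map_of_mem hy))

theorem apply_doubledFamily (h : AnticommutingInvolutions S T) (hS : B.IsSelfAdjoint S)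
    (hT : B.IsSelfAdjoint T) {κ : Type*} [DecidableEq κ] {v : κ → V}
    (hv : ∀ i, v i ∈ S.eigenspace 1) (hgram : ∀ i j, B (v i) (v j) = (1 : Matrix κ κ R) i j)
    (a b c : R) (p q : κ × Fin 2) :
    B (doubledFamily T v p) ((a • 1 + b • S + c • T) (doubledFamily T v q)) =
      ((1 : Matrix κ κ R) ⊗ₖ !![a + b, c; c, a - b]) p q := by
  have hSv (i) : S (v i) = v i := by simpa using hv i
  have hSTv (i) : S (T (v i)) = -T (v i) := by rw [h.anticomm, hSv]
  have hright (i j) : B (v i) (T (v j)) = 0 :=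
    h.apply_apply_eq_zero_of_mem_eigenspace_one hS (hv i) (hv j)
  have hleft (i j) : B (T (v i)) (v j) = 0 := (hT _ _).trans (hright i j)
  have hboth (i j) : B (T (v i)) (T (v j)) = (1 : Matrix κ κ R) i j := by
    rw [hT, h.involutive_right, hgram]
  obtain ⟨i, s⟩ := p
  obtain ⟨j, t⟩ := q
  fin_cases s <;> fin_cases t <;>
    simp [doubledFamily, hSv, hSTv, h.involutive_right _, hgram, hright, hleft, hboth] <;> ring

theorem isCompl_eigenspace_one_map [IsTorsionFree R V] (h : AnticommutingInvolutions S T) :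
    IsCompl (S.eigenspace 1) ((S.eigenspace 1).map T) := by
  refine ⟨(S.disjoint_genEigenspace one_ne_neg_one 1 1).mono_right h.map_eigenspace_one_le, ?_⟩
  refine Submodule.codisjoint_iff_exists_add_eq.mpr fun x =>
    ⟨⅟(2 : R) • (x + S x), T (⅟(2 : R) • T (x - S x)), ?_, Submodule.mem_map_of_mem ?_, ?_⟩
  · simp [h.involutive_left x, add_comm]
  · simp [h.anticomm, h.involutive_left x, ← sub_eq_neg_add]
  · rw [map_smul, h.involutive_right, ← smul_add, add_add_sub_cancel, ← two_smul R x,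
      invOf_smul_smul]

end IsDomain

variable {K V : Type*} [Field K] [Invertible (2 : K)] [AddCommGroup V] [Module K V]
  [FiniteDimensional K V] {S T : End K V} {B : LinearMap.BilinForm K V}

theorem finrank_eigenspace_one_mul_two (h : AnticommutingInvolutions S T) :
    finrank K (S.eigenspace 1) * 2 = finrank K V := by
  have hmap : finrank K ((S.eigenspace 1).map T) = finrank K (S.eigenspace 1) :=
    (Submodule.equivMapOfInjective T h.involutive_right.injective _).finrank_eq.symm
  rw [← Submodule.finrank_add_eq_of_isCompl h.isCompl_eigenspace_one_map, hmap, mul_two]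

theorem nondegenerate_restrict_eigenspace_one (h : AnticommutingInvolutions S T)
    (hS : B.IsSelfAdjoint S) (hB : B.Nondegenerate) :
    (B.restrict (S.eigenspace 1)).Nondegenerate := by
  have hortho : ∀ x ∈ S.eigenspace 1, ∀ y ∈ (S.eigenspace 1).map T, B x y = 0 := by
    rintro x hx _ ⟨y, hy, rfl⟩
    exact h.apply_apply_eq_zero_of_mem_eigenspace_one hS hx hy
  rw [LinearMap.BilinForm.nondegenerate_iff_ker_eq_bot,
    LinearMap.BilinForm.ker_restrict_eq_of_codisjoint h.isCompl_eigenspace_one_map.codisjoint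
      hortho, hB.ker_eq_bot, Submodule.comap_bot, Submodule.ker_subtype]

theorem exists_orthonormal_mem_eigenspace_one {κ : Type*} [Fintype κ] [DecidableEq κ]
    (hsq : ∀ a : K, IsSquare a) (h : AnticommutingInvolutions S T) (hS : B.IsSelfAdjoint S)
    (hB : B.Nondegenerate) (hsymm : B.IsSymm) (hκ : Fintype.card κ * 2 = finrank K V) :
    ∃ v : κ → V, (∀ i, v i ∈ S.eigenspace 1) ∧
      ∀ i j, B (v i) (v j) = (1 : Matrix κ κ K) i j := by
  obtain ⟨b, hb⟩ := exists_basis_toMatrix_eq_one hsq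
    (h.nondegenerate_restrict_eigenspace_one hS hB) (hsymm.restrict _)
  have hcard : Fintype.card κ = finrank K (S.eigenspace 1) :=
    Nat.mul_right_cancel two_pos (hκ.trans h.finrank_eigenspace_one_mul_two.symm)
  let σ := Fintype.equivFinOfCardEq hcard
  refine ⟨fun i => b (σ i), fun i => (b (σ i)).2, fun i j => ?_⟩
  simpa [LinearMap.BilinForm.toMatrix_apply, one_apply] using congr_fun₂ hb (σ i) (σ j)

end AnticommutingInvolutions

theorem isSymm_fin_two_iff {R : Type*} [Ring R] [Invertible (2 : R)]
    {A : Matrix (Fin 2) (Fin 2) R} :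
    A.IsSymm ↔ ∃ a b c : R, A = !![a + b, c; c, a - b] := by
  constructor
  · intro hA
    refine ⟨⅟2 * (A 0 0 + A 1 1), ⅟2 * (A 0 0 - A 1 1), A 0 1, ?_⟩
    rw [eta_fin_two A, hA.apply 0 1, ← mul_add, ← mul_sub, add_add_sub_cancel,
      add_sub_sub_cancel, ← two_mul, ← two_mul, invOf_mul_cancel_left, invOf_mul_cancel_left]
    rfl
  · rintro ⟨a, b, c, rfl⟩
    exact IsSymm.ext fun i j => by fin_cases i <;> fin_cases j <;> rfl

section Matrix

variable {R ι : Type*} [CommRing R] [Fintype ι] [DecidableEq ι] {U X Y : Matrix ι ι R}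

theorem isSelfAdjoint_toLin'_inv_mul {M : Matrix ι ι R} (hU : IsUnit U.det) (hUs : U.IsSymm)
    (hM : M.IsSymm) : (toBilin' U).IsSelfAdjoint (toLin' (U⁻¹ * M)) := by
  intro x y
  simp only [toBilin'_apply', toLin'_apply, mulVec_mulVec, mul_nonsing_inv_cancel_left _ _ hU]
  rw [dotProduct_mulVec, ← mulVec_transpose, hUs.eq, mulVec_mulVec,
    mul_nonsing_inv_cancel_left _ _ hU, dotProduct_mulVec, ← mulVec_transpose, hM.eq]

theorem involutive_toLin'_inv_mul (hU : IsUnit U.det) (hXX : X * U⁻¹ * X = U) :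
    Function.Involutive (toLin' (U⁻¹ * X)) := fun x => by
  rw [← toLin'_mul_apply, mul_assoc, ← mul_assoc X, hXX, nonsing_inv_mul _ hU, toLin'_one,
    LinearMap.id_apply]

theorem anticommutingInvolutions_toLin'_inv_mul (hU : IsUnit U.det) (hXX : X * U⁻¹ * X = U)
    (hYY : Y * U⁻¹ * Y = U) (hXY : X * U⁻¹ * Y + Y * U⁻¹ * X = 0) :
    AnticommutingInvolutions (toLin' (U⁻¹ * X)) (toLin' (U⁻¹ * Y)) := by
  refine ⟨involutive_toLin'_inv_mul hU hXX, involutive_toLin'_inv_mul hU hYY, fun x => ?_⟩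
  have hanticomm : U⁻¹ * X * (U⁻¹ * Y) = -(U⁻¹ * Y * (U⁻¹ * X)) := by
    rw [eq_neg_iff_add_eq_zero]
    simpa only [mul_add, mul_zero, mul_assoc] using congrArg (U⁻¹ * ·) hXY
  rw [← toLin'_mul_apply, ← toLin'_mul_apply, hanticomm, map_neg, LinearMap.neg_apply]

end Matrix

section Congruence

variable {K ι : Type*} [Field K] [Invertible (2 : K)] [Fintype ι] [DecidableEq ι]
  {U X Y : Matrix ι ι K}

theorem exists_mul_mul_transpose_eq_one_kronecker {κ : Type*} [DecidableEq κ]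
    (hsq : ∀ a : K, IsSquare a) (hU : IsUnit U.det)
    (hUs : U.IsSymm) (hXs : X.IsSymm) (hYs : Y.IsSymm)
    (hXX : X * U⁻¹ * X = U) (hYY : Y * U⁻¹ * Y = U) (hXY : X * U⁻¹ * Y + Y * U⁻¹ * X = 0)
    (e : ι ≃ κ × Fin 2) :
    ∃ P : Matrix ι ι K, ∀ a b c : K, P * (a • U + b • X + c • Y) * Pᵀ =
      ((1 : Matrix κ κ K) ⊗ₖ !![a + b, c; c, a - b]).submatrix e e := by
  have : Finite κ := .of_surjective _ (Prod.fst_surjective.comp e.surjective)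
  let _ := Fintype.ofFinite κ
  have hpair := anticommutingInvolutions_toLin'_inv_mul hU hXX hYY hXY
  have hS := isSelfAdjoint_toLin'_inv_mul hU hUs hXs
  have hT := isSelfAdjoint_toLin'_inv_mul hU hUs hYs
  have hκ : Fintype.card κ * 2 = finrank K (ι → K) := by
    simp [Fintype.card_congr e]
  obtain ⟨v, hv, hgram⟩ := hpair.exists_orthonormal_mem_eigenspace_one hsq hS
    (LinearMap.BilinForm.nondegenerate_toBilin'_of_det_ne_zero' U hU.ne_zero)
    (isSymm_toBilin'_iff_isSymm.mpr hUs) hκ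
  refine ⟨of fun i => doubledFamily (toLin' (U⁻¹ * Y)) v (e i), fun a b c => ?_⟩
  have hfactor : a • U + b • X + c • Y = U * (a • 1 + b • (U⁻¹ * X) + c • (U⁻¹ * Y)) := by
    simp [mul_add, mul_nonsing_inv_cancel_left _ _ hU]
  have htoLin : toLin' (a • 1 + b • (U⁻¹ * X) + c • (U⁻¹ * Y)) =
      a • 1 + b • toLin' (U⁻¹ * X) + c • toLin' (U⁻¹ * Y) := by
    simp only [map_add, map_smul, toLin'_one, End.one_eq_id]
  ext i j
  rw [mul_mul_apply, submatrix_apply, ← hpair.apply_doubledFamily hS hT hv hgram, ← htoLin,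
    hfactor, ← mulVec_mulVec, toBilin'_apply', toLin'_apply]
  rfl

theorem stmt16_general (hsq : ∀ a : K, IsSquare a)
    (hU : IsUnit U.det) (hUs : U.IsSymm) (hXs : X.IsSymm) (hYs : Y.IsSymm)
    (hXX : X * U⁻¹ * X = U) (hYY : Y * U⁻¹ * Y = U) (hXY : X * U⁻¹ * Y + Y * U⁻¹ * X = 0) :
    Even (Fintype.card ι) ∧ ∀ {κ : Type*} [DecidableEq κ] (e : ι ≃ κ × Fin 2),
      ∃ P : Matrix ι ι K, IsUnit P.det ∧
        (fun A => P * A * Pᵀ) '' (Submodule.span K {U, X, Y} : Set (Matrix ι ι K)) =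
          {M | ∃ A : Matrix (Fin 2) (Fin 2) K,
            A.IsSymm ∧ M = ((1 : Matrix κ κ K) ⊗ₖ A).submatrix e e} := by
  constructor
  · have hpair := anticommutingInvolutions_toLin'_inv_mul hU hXX hYY hXY
    rw [← finrank_fintype_fun_eq_card K, ← hpair.finrank_eigenspace_one_mul_two]
    exact even_two.mul_left _
  intro κ _ e
  obtain ⟨P, hP⟩ :=
    exists_mul_mul_transpose_eq_one_kronecker hsq hU hUs hXs hYs hXX hYY hXY e
  refine ⟨P, ?_, ?_⟩
  · have hPU : P * (U * Pᵀ) = 1 := by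
      simpa [← one_fin_two, mul_assoc] using hP 1 0 0
    exact isUnit_det_of_right_inverse hPU
  · ext M
    simp only [Set.mem_image, SetLike.mem_coe, Submodule.mem_span_triple, isSymm_fin_two_iff,
      Set.mem_ofPred_eq]
    constructor <;> rintro ⟨_, ⟨a, b, c, rfl⟩, rfl⟩ <;> exact ⟨_, ⟨a, b, c, rfl⟩, hP a b c⟩

end Congruence

section Fin

variable {n : ℕ}

theorem jmul_self (U X : Mat n) : jmul U X X = X * U⁻¹ * X := by
  rw [jmul]
  module

theorem jmul_eq_zero_iff {U X Y : Mat n} :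
    jmul U X Y = 0 ↔ X * U⁻¹ * Y + Y * U⁻¹ * X = 0 := by
  rw [jmul, smul_eq_zero_iff_right (one_div_ne_zero two_ne_zero)]

/-- The indexing `i ↦ (i / 2, i % 2)` of consecutive `2 × 2` blocks, which identifies `blockRep`
with a Kronecker product. -/
def blockIndexEquiv (hn : Even n) : Fin n ≃ Fin (n / 2) × Fin 2 :=
  (finCongr (Nat.div_two_mul_two_of_even hn).symm).trans finProdFinEquiv.symm

theorem blockRep_eq_submatrix_kronecker (hn : Even n) (A : Matrix (Fin 2) (Fin 2) ℂ) :
    blockRep n A = ((1 : Matrix (Fin (n / 2)) (Fin (n / 2)) ℂ) ⊗ₖ A).submatrix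
      (blockIndexEquiv hn) (blockIndexEquiv hn) := by
  ext i j
  simp [blockRep, blockIndexEquiv, one_apply, Fin.ext_iff, Fin.divNat, Fin.modNat]

end Fin

/-- Every Jordan net in `Sⁿ` of type 1(b) (basis `{U, X, Y}` with `X•X = U`,
`Y•Y = U`, `X•Y = 0`) exists only for even `n` and is congruent to the Kronecker
product of `1_{n/2}` with `S²`. -/
theorem stmt16 {n : ℕ} (U : Mat n) (hU : IsUnit U.det)
    (L : Submodule ℂ (Mat n)) (hsym : ∀ X ∈ L, Matrix.IsSymm X)
    (hUL : U ∈ L) (hclosed : ∀ X ∈ L, ∀ Y ∈ L, jmul U X Y ∈ L)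
    (hdim : Module.finrank ℂ L = 3)
    (X Y : Mat n) (hX : X ∈ L) (hY : Y ∈ L)
    (hbasis : LinearIndependent ℂ ![U, X, Y])
    (hspan : Submodule.span ℂ {U, X, Y} = L)
    (hXX : jmul U X X = U) (hYY : jmul U Y Y = U) (hXY : jmul U X Y = 0) :
    Even n ∧
    ∃ P : Mat n, IsUnit P.det ∧
      (fun A => P * A * Pᵀ) '' (L : Set (Mat n)) =
        {M : Mat n | ∃ A : Matrix (Fin 2) (Fin 2) ℂ, A.IsSymm ∧ M = blockRep n A} := by
  obtain ⟨hn, h⟩ := stmt16_general IsAlgClosed.exists_eq_mul_self hU (hsym U hUL) (hsym X hX)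
    (hsym Y hY) ((jmul_self U X).symm.trans hXX) ((jmul_self U Y).symm.trans hYY)
    (jmul_eq_zero_iff.mp hXY)
  rw [Fintype.card_fin] at hn
  refine ⟨hn, ?_⟩
  simpa only [hspan, ← blockRep_eq_submatrix_kronecker hn] using h (blockIndexEquiv hn)
end
end

section
/- In S⁵, let J₅ be the 5×5 matrix with ones on the antidiagonal, and let L* = span_ℂ{J₅, E₁₅+E₅₁, E₁₄+E₄₁}. Then L* is a 3-dimensional Jordan subalgebra of (S⁵, •_{J₅}) with unit J₅, and every nonzero matrix in L* has rank at least 2 (so L* contains no rank-one matrix). -/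
/-!
In `(S⁵, •_{J₅})` the matrix `E = E₁₅ + E₅₁` is idempotent and `N = E₁₄ + E₄₁` satisfies `N • N = 0`
and `E • N = N / 2`, so `span {J₅, E, N}` is closed under the product.

A combination `M = a J₅ + b E + c N` has entries `a`, `a + b` and `c` at the `1`-based positions
`(2, 4)`, `(1, 5)` and `(1, 4)`, and `M₁₁ = M₂₂ = 0`. The principal minors of the symmetric matrix
`M` on these three pairs of indices are therefore `-a²`, `-(a + b)²` and `-c²`: they all vanish only
if `M = 0`.
-/


open Matrix

noncomputable section

/-- `J₅`, the `5 × 5` matrix with ones on the antidiagonal. -/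
def J5 : Mat 5 := !![(0:ℂ),0,0,0,1;0,0,0,1,0;0,0,1,0,0;0,1,0,0,0;1,0,0,0,0]

/-- `E₁₅ + E₅₁`. -/
def E15 : Mat 5 := !![(0:ℂ),0,0,0,1;0,0,0,0,0;0,0,0,0,0;0,0,0,0,0;1,0,0,0,0]

/-- `E₁₄ + E₄₁`. -/
def E14 : Mat 5 := !![(0:ℂ),0,0,1,0;0,0,0,0,0;0,0,0,0,0;1,0,0,0,0;0,0,0,0,0]

/-- The net `L* = span{J₅, E₁₅+E₅₁, E₁₄+E₄₁}` in `S⁵`. -/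
def Lstar : Submodule ℂ (Mat 5) := Submodule.span ℂ {J5, E15, E14}

section Symmetric

variable {m R : Type*} {A : Matrix m m R}

lemma isSymm_of_mem_span [CommSemiring R] {s : Set (Matrix m m R)} (hs : ∀ B ∈ s, B.IsSymm)
    (hA : A ∈ Submodule.span R s) : A.IsSymm := by
  induction hA using Submodule.span_induction with
  | mem B hB => exact hs B hB
  | zero => exact isSymm_zero
  | add B C _ _ hB hC => exact hB.add hC
  | smul r B _ hB => exact hB.smul r

lemma card_le_rank_of_det_submatrix_ne_zero {n k : Type*} [Fintype n] [Fintype k] [DecidableEq k]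
    [CommRing R] [IsDomain R] (A : Matrix m n R) {r : k → m} {c : k → n}
    (h : (A.submatrix r c).det ≠ 0) : Fintype.card k ≤ A.rank :=
  rank_of_det_ne_zero h ▸ rank_submatrix_le A r c

lemma two_le_rank_of_isSymm_of_diag_eq_zero [Fintype m] [CommRing R] [IsDomain R] (hA : A.IsSymm)
    {i j : m} (hii : A i i = 0) (hij : A i j ≠ 0) : 2 ≤ A.rank := by
  have hminor : (A.submatrix ![i, j] ![i, j]).det = -(A i j * A i j) := by
    rw [det_fin_two]
    simp [hii, hA.apply i j]
  exact card_le_rank_of_det_submatrix_ne_zero A (hminor ▸ neg_ne_zero.2 (mul_ne_zero hij hij))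

end Symmetric

section JordanProduct

variable {n : ℕ} {U : Mat n}

lemma jmul_comm (U X Y : Mat n) : jmul U X Y = jmul U Y X := by
  rw [jmul, jmul, add_comm]

lemma jmul_unit_left (hU : IsUnit U.det) (X : Mat n) : jmul U U X = X := by
  rw [jmul, mul_nonsing_inv U hU, one_mul, nonsing_inv_mul_cancel_right U X hU, ← two_smul ℂ X,
    smul_smul]
  norm_num

/-- The Jordan product `X •_U Y` as a bilinear map in `X` and `Y`, which allows membership in a span
to be checked on generators. -/
def jmulBilin (U : Mat n) : Mat n →ₗ[ℂ] Mat n →ₗ[ℂ] Mat n :=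
  LinearMap.mk₂ ℂ (jmul U)
    (fun X X' Y ↦ by simp only [jmul, add_mul, mul_add]; module)
    (fun c X Y ↦ by simp only [jmul, smul_mul_assoc, mul_smul_comm]; module)
    (fun X Y Y' ↦ by simp only [jmul, add_mul, mul_add]; module)
    (fun c X Y ↦ by simp only [jmul, smul_mul_assoc, mul_smul_comm]; module)

lemma jmul_mem_of_mem_span {s : Set (Mat n)} {L : Submodule ℂ (Mat n)}
    (hs : ∀ X ∈ s, ∀ Y ∈ s, jmul U X Y ∈ L) {X Y : Mat n}
    (hX : X ∈ Submodule.span ℂ s) (hY : Y ∈ Submodule.span ℂ s) : jmul U X Y ∈ L :=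
  LinearMap.BilinMap.apply_apply_mem_of_mem_span L s s (jmulBilin U) hs X Y hX hY

lemma jmul_mem_span_insert_unit (hU : IsUnit U.det) {s : Set (Mat n)}
    (hs : ∀ X ∈ s, ∀ Y ∈ s, jmul U X Y ∈ Submodule.span ℂ (insert U s)) {X Y : Mat n}
    (hX : X ∈ Submodule.span ℂ (insert U s)) (hY : Y ∈ Submodule.span ℂ (insert U s)) :
    jmul U X Y ∈ Submodule.span ℂ (insert U s) := by
  refine jmul_mem_of_mem_span ?_ hX hY
  rintro A (rfl | hA) B hB
  · rw [jmul_unit_left hU]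
    exact Submodule.subset_span hB
  · rcases hB with rfl | hB
    · rw [jmul_comm, jmul_unit_left hU]
      exact Submodule.subset_span (Set.mem_insert_of_mem _ hA)
    · exact hs A hA B hB

end JordanProduct

lemma J5_mul_self : J5 * J5 = 1 := by
  ext i j
  fin_cases i <;> fin_cases j <;> simp [J5]

lemma J5_inv : J5⁻¹ = J5 :=
  inv_eq_left_inv J5_mul_self

lemma isUnit_det_J5 : IsUnit J5.det :=
  isUnit_det_of_left_inverse J5_mul_self

lemma jmul_E15_self : jmul J5 E15 E15 = E15 := by
  have h : E15 * J5 * E15 = E15 := by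
    ext i j
    fin_cases i <;> fin_cases j <;> simp [J5, E15]
  rw [jmul, J5_inv, h]
  module

lemma jmul_E14_self : jmul J5 E14 E14 = 0 := by
  have h : E14 * J5 * E14 = 0 := by
    ext i j
    fin_cases i <;> fin_cases j <;> simp [J5, E14]
  rw [jmul, J5_inv, h, add_zero, smul_zero]

lemma jmul_E15_E14 : jmul J5 E15 E14 = (1 / 2 : ℂ) • E14 := by
  have h : E15 * J5 * E14 + E14 * J5 * E15 = E14 := by
    ext i j
    fin_cases i <;> fin_cases j <;> simp [J5, E14, E15]
  rw [jmul, J5_inv, h]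

lemma jmul_mem_Lstar {X Y : Mat 5} (hX : X ∈ Lstar) (hY : Y ∈ Lstar) : jmul J5 X Y ∈ Lstar := by
  have hE15 : E15 ∈ Lstar := Submodule.subset_span (by simp)
  have hE14 : E14 ∈ Lstar := Submodule.subset_span (by simp)
  refine jmul_mem_span_insert_unit isUnit_det_J5 ?_ hX hY
  rintro _ (rfl | rfl) _ (rfl | rfl)
  · rwa [jmul_E15_self]
  · rw [jmul_E15_E14]
    exact Lstar.smul_mem _ hE14
  · rw [jmul_comm, jmul_E15_E14]
    exact Lstar.smul_mem _ hE14
  · rw [jmul_E14_self]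
    exact Lstar.zero_mem

lemma isSymm_of_mem_Lstar {M : Mat 5} (hM : M ∈ Lstar) : M.IsSymm := by
  refine isSymm_of_mem_span ?_ hM
  rintro _ (rfl | rfl | rfl) <;> refine IsSymm.ext fun i j ↦ ?_ <;>
    fin_cases i <;> fin_cases j <;> simp [J5, E15, E14]

lemma coeffs_eq_zero_of_entries_eq_zero {a b c : ℂ}
    (h13 : (a • J5 + b • E15 + c • E14) 1 3 = 0) (h04 : (a • J5 + b • E15 + c • E14) 0 4 = 0)
    (h03 : (a • J5 + b • E15 + c • E14) 0 3 = 0) : a = 0 ∧ b = 0 ∧ c = 0 := by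
  have ha : a = 0 := by simpa [J5, E15, E14] using h13
  have hab : a + b = 0 := by simpa [J5, E15, E14] using h04
  have hc : c = 0 := by simpa [J5, E15, E14] using h03
  exact ⟨ha, by simpa [ha] using hab, hc⟩

lemma linearIndependent_J5_E15_E14 : LinearIndependent ℂ ![J5, E15, E14] := by
  refine Fintype.linearIndependent_iff.2 fun g hg ↦ ?_
  have hsum : g 0 • J5 + g 1 • E15 + g 2 • E14 = 0 := by simpa [Fin.sum_univ_three] using hg
  obtain ⟨h0, h1, h2⟩ : g 0 = 0 ∧ g 1 = 0 ∧ g 2 = 0 :=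
    coeffs_eq_zero_of_entries_eq_zero (by rw [hsum]; rfl) (by rw [hsum]; rfl)
      (by rw [hsum]; rfl)
  intro i
  fin_cases i <;> assumption

lemma finrank_Lstar : Module.finrank ℂ Lstar = 3 := by
  have hspan : Lstar = Submodule.span ℂ (Set.range ![J5, E15, E14]) := by
    rw [Lstar, range_cons, range_cons_cons_empty, Set.singleton_union]
  rw [hspan, finrank_span_eq_card linearIndependent_J5_E15_E14, Fintype.card_fin]

lemma two_le_rank_of_mem_Lstar {M : Mat 5} (hM : M ∈ Lstar) (hM0 : M ≠ 0) : 2 ≤ M.rank := by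
  have hsymm := isSymm_of_mem_Lstar hM
  obtain ⟨a, b, c, rfl⟩ := Submodule.mem_span_triple.1 hM
  have h00 : (a • J5 + b • E15 + c • E14) 0 0 = 0 := by simp [J5, E15, E14]
  have h11 : (a • J5 + b • E15 + c • E14) 1 1 = 0 := by simp [J5, E15, E14]
  by_contra hrank
  obtain ⟨rfl, rfl, rfl⟩ : a = 0 ∧ b = 0 ∧ c = 0 := coeffs_eq_zero_of_entries_eq_zero
    (by_contra fun h ↦ hrank (two_le_rank_of_isSymm_of_diag_eq_zero hsymm h11 h))
    (by_contra fun h ↦ hrank (two_le_rank_of_isSymm_of_diag_eq_zero hsymm h00 h))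
    (by_contra fun h ↦ hrank (two_le_rank_of_isSymm_of_diag_eq_zero hsymm h00 h))
  exact hM0 (by simp only [zero_smul, add_zero])

/-- `L*` is a `3`-dimensional Jordan subalgebra of `(S⁵, •_{J₅})` with unit `J₅`,
and every nonzero matrix in `L*` has rank at least `2`. -/
theorem stmt17 :
    (∀ M ∈ Lstar, Matrix.IsSymm M) ∧
    J5 ∈ Lstar ∧
    (∀ X ∈ Lstar, ∀ Y ∈ Lstar, jmul J5 X Y ∈ Lstar) ∧
    Module.finrank ℂ Lstar = 3 ∧
    (∀ M ∈ Lstar, M ≠ 0 → 2 ≤ M.rank) := by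
  exact ⟨fun _ ↦ isSymm_of_mem_Lstar, Submodule.subset_span (by simp),
    fun _ hX _ hY ↦ jmul_mem_Lstar hX hY, finrank_Lstar, fun _ ↦ two_le_rank_of_mem_Lstar⟩
end
end
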